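/- Let P = A ∪ B be an ℓ-divided set with no ℓ-divided 5-hole in P, with |A| ≥ 6, with A not in convex position, with ℓ vertical, A to the left of ℓ, and all points of P having distinct x-coordinates. Let W_i, W_{i+1}, W_{i+2} be three consecutive a*-wedges whose union is convex and contains at least four points of B. Then w_i ≤ 2, w_{i+1} ≤ 2, and w_{i+2} ≤ 2. -/

import Mathlib

noncomputable section

/-- Points of the plane. -/
abbrev Pt : Type := ℝ × ℝ

/-- The cross product (signed area) of two planar vectors. -/
def cross2 (u v : Pt) : ℝ := u.1 * v.2 - u.2 * v.1

/-- The dot product of two planar vectors. -/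
def dotp (v p : Pt) : ℝ := v.1 * p.1 + v.2 * p.2

/-- A set of points in the plane is in general position if no three of its points
are collinear. -/
def GenPos (P : Set Pt) : Prop :=
  ∀ p ∈ P, ∀ q ∈ P, ∀ r ∈ P, p ≠ q → p ≠ r → q ≠ r →
    ¬ Collinear ℝ ({p, q, r} : Set Pt)

/-- A set of points is in convex position if no point of the set lies in the convex
hull of the other points. -/
def ConvexPos (S : Set Pt) : Prop :=
  ∀ p ∈ S, p ∉ convexHull ℝ (S \ {p})

/-- `H` is a `k`-hole in `P`: a subset of `P` of size `k` in convex position whose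
convex hull contains no point of `P \ H`. -/
def IsKHole (k : ℕ) (P H : Finset Pt) : Prop :=
  H ⊆ P ∧ H.card = k ∧ ConvexPos (↑H : Set Pt) ∧
    ∀ p ∈ P, p ∉ H → p ∉ convexHull ℝ (↑H : Set Pt)

/-- The number of `k`-holes in `P`. -/
def numKHoles (k : ℕ) (P : Finset Pt) : ℕ :=
  Set.ncard {H : Finset Pt | IsKHole k P H}

/-- For an `ℓ`-divided set `P = A ∪ B`, an `ℓ`-divided 5-hole is a 5-hole in `A ∪ B`
containing points of both `A` and `B`. -/
def DividedFiveHole (A B H : Finset Pt) : Prop :=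
  IsKHole 5 (A ∪ B) H ∧ (↑H ∩ ↑A : Set Pt).Nonempty ∧ (↑H ∩ ↑B : Set Pt).Nonempty

/-- `x` is an extremal point of `P`: it lies on the boundary of the convex hull of `P`. -/
def OnHullBoundary (P : Finset Pt) (x : Pt) : Prop :=
  x ∈ frontier (convexHull ℝ (↑P : Set Pt))

/-- An `ℓ`-divided set `C = A ∪ B` is `ℓ`-critical if neither part is in convex position
and, for every extremal point `x` of `C`, one of the sets `(C \ {x}) ∩ A` and
`(C \ {x}) ∩ B` is in convex position. -/
def LCritical (A B : Finset Pt) : Prop :=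
  ¬ ConvexPos (↑A : Set Pt) ∧ ¬ ConvexPos (↑B : Set Pt) ∧
    ∀ x ∈ A ∪ B, OnHullBoundary (A ∪ B) x →
      (ConvexPos (↑(A.erase x) : Set Pt) ∨ ConvexPos (↑(B.erase x) : Set Pt))

/-- The closed wedge with apex `a` swept clockwise from the ray `a→p` to the ray `a→q`.
If the clockwise angle from `a→p` to `a→q` is at most `π` the wedge is convex, otherwise
it is the corresponding reflex region. -/
def Wedge (a p q : Pt) : Set Pt :=
  if cross2 (p - a) (q - a) ≤ 0 then
    {x | cross2 (p - a) (x - a) ≤ 0 ∧ 0 ≤ cross2 (q - a) (x - a)}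
  else
    {x | cross2 (p - a) (x - a) ≤ 0 ∨ 0 ≤ cross2 (q - a) (x - a)}

/-- `W` is an `a`-wedge of `A`: one of the closed regions into which the rays from `a`
through the other points of `A` partition the plane, i.e. a wedge spanned by two
points of `A \ {a}` that are angularly consecutive around `a` (no other point of `A`
lies in the wedge). -/
def IsAWedge (A : Finset Pt) (a : Pt) (W : Set Pt) : Prop :=
  ∃ p ∈ A.erase a, ∃ q ∈ A.erase a, p ≠ q ∧ W = Wedge a p q ∧
    (↑A : Set Pt) ∩ Wedge a p q ⊆ {a, p, q}

/-- The combinatorial data of the `a*`-wedges of an `ℓ`-divided set `P = A ∪ B`, where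
`ℓ` is the vertical line `x = x0` and `A` lies to its left: `aStar` is the rightmost
interior point `a*` of `A`; `lbl` is the clockwise cyclic labeling `a_0, a_1, …` of
`A \ {a*}` (period `|A| - 1`), so that the `k`-th wedge `W_k` is swept clockwise from
the ray through `lbl (k-1)` to the ray through `lbl k` and contains no other point
of `A`; the wedges `W_1, …, W_t` are exactly those meeting `ℓ`, in top-to-bottom
order along `ℓ`. -/
structure StarSetup (x0 : ℝ) (A : Finset Pt) where
  aStar : Pt
  lbl : ℕ → Pt
  t : ℕ
  aStar_mem : aStar ∈ A
  aStar_interior : aStar ∈ interior (convexHull ℝ (↑A : Set Pt))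
  aStar_rightmost : ∀ p ∈ A, p ∈ interior (convexHull ℝ (↑A : Set Pt)) → p.1 ≤ aStar.1
  lbl_mem : ∀ k, lbl k ∈ A.erase aStar
  lbl_periodic : ∀ k, lbl (k + (A.card - 1)) = lbl k
  lbl_bij : ∀ p ∈ A.erase aStar, ∃! k, k ∈ Finset.Icc 1 (A.card - 1) ∧ lbl k = p
  consec : ∀ k ∈ Finset.Icc 1 (A.card - 1),
    (↑A : Set Pt) ∩ Wedge aStar (lbl (k - 1)) (lbl k) ⊆ {aStar, lbl (k - 1), lbl k}
  t_pos : 1 ≤ t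
  t_le : t ≤ A.card - 1
  inter_iff : ∀ k ∈ Finset.Icc 1 (A.card - 1),
    ((Wedge aStar (lbl (k - 1)) (lbl k)) ∩ {p : Pt | p.1 = x0}).Nonempty ↔ k ≤ t
  ordered : ∀ k ∈ Finset.Icc 1 t, ∀ k' ∈ Finset.Icc 1 t, k < k' →
    ∀ p ∈ (Wedge aStar (lbl (k - 1)) (lbl k)) ∩ {q : Pt | q.1 = x0},
    ∀ p' ∈ (Wedge aStar (lbl (k' - 1)) (lbl k')) ∩ {q : Pt | q.1 = x0},
      p'.2 ≤ p.2

/-- The `k`-th `a*`-wedge `W_k`. -/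
def StarSetup.W {x0 : ℝ} {A : Finset Pt} (S : StarSetup x0 A) (k : ℕ) : Set Pt :=
  Wedge S.aStar (S.lbl (k - 1)) (S.lbl k)

/-- `w_k`, the number of points of `B` in the `k`-th `a*`-wedge. -/
def StarSetup.w {x0 : ℝ} {A : Finset Pt} (S : StarSetup x0 A) (B : Finset Pt) (k : ℕ) : ℕ :=
  Set.ncard ((↑B : Set Pt) ∩ S.W k)

/-!
List the points in a convex wedge clockwise around its apex `a` and send `a` to infinity downwards
by a projective map. Whether consecutive points then form a cup or a cap is a signotope, the line
`ℓ` becomes a height function, and a divided pentagon is the apex with a 4-cap, a 5-cup, a 4-cup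
with a point above it, or a 4-cap with a point below it. If there is no divided 5-hole, each such
pentagon contains a further point.

Three consecutive gaps `p₀ p₁`, `p₁ p₂`, `p₂ p₃` between points of `A` remain. Removing a point of
`B` above which no segment passes creates no divided 5-hole, so a gap with too many points of `B`
can be thinned out until it contains exactly three, `b₁`, `b₂`, `b₃`. The line through consecutive
`bᵢ` has an end of the gap above it, on the left or on the right. In the middle gap each of the four
combinations produces a divided 5-hole by means of the next points `p₀` and `p₃` of `A`. In the left
gap this needs a point of `B` further to the right; if all of `B` is in the left gap, the last point
removed takes over its role. The right gap is the mirror image of the left one.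
-/

/-! ### Orientations and convex pentagons -/

/-- Twice the signed area of the triangle `x y z`, positive when it is counterclockwise. -/
def orient (x y z : Pt) : ℝ := cross2 (y - x) (z - x)

section Orientation

lemma cross2_smul (v w : Pt) (t : ℝ) : cross2 v (t • w) = t * cross2 v w := by
  simp only [cross2, Prod.smul_fst, Prod.smul_snd, smul_eq_mul]; ring

lemma cross2_sub (v x y : Pt) : cross2 v (x - y) = cross2 v x - cross2 v y := by
  simp only [cross2, Prod.fst_sub, Prod.snd_sub]; ring

lemma isLinearMap_cross2 (v : Pt) : IsLinearMap ℝ (cross2 v) where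
  map_add x y := by simp only [cross2, Prod.fst_add, Prod.snd_add]; ring
  map_smul t x := cross2_smul v x t

lemma orient_rotate (x y z : Pt) : orient y z x = orient x y z := by
  simp only [orient, cross2, Prod.fst_sub, Prod.snd_sub]; ring

lemma orient_swap_left (x y z : Pt) : orient y x z = -orient x y z := by
  simp only [orient, cross2, Prod.fst_sub, Prod.snd_sub]; ring

lemma orient_swap_right (x y z : Pt) : orient x z y = -orient x y z := by
  simp only [orient, cross2, Prod.fst_sub, Prod.snd_sub]; ring

lemma orient_self_left (x y : Pt) : orient x x y = 0 := by
  simp only [orient, cross2, Prod.fst_sub, Prod.snd_sub]; ring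

lemma orient_self_outer (x y : Pt) : orient x y x = 0 := by
  simp only [orient, cross2, Prod.fst_sub, Prod.snd_sub]; ring

lemma orient_self_right (x y : Pt) : orient x y y = 0 := by
  simp only [orient, cross2, Prod.fst_sub, Prod.snd_sub]; ring

lemma orient_plucker (b p q r s : Pt) :
    orient b p q * orient b r s - orient b p r * orient b q s + orient b p s * orient b q r =
      0 := by
  simp only [orient, cross2, Prod.fst_sub, Prod.snd_sub]; ring

-- The same relation, arranged so that the factors involving `a` are all negative for a clockwise
-- fan `w, x, y, z` around `a`; the pivot of the relation is `w`, `x`, `y` and `z`, respectively.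

lemma orient_plucker₁ (a w x y z : Pt) :
    orient a w y * orient w x z = orient a w z * orient w x y + orient a w x * orient w y z := by
  simp only [orient, cross2, Prod.fst_sub, Prod.snd_sub]; ring

lemma orient_plucker₂ (a w x y z : Pt) :
    orient a x y * orient w x z = orient a x z * orient w x y + orient a w x * orient x y z := by
  simp only [orient, cross2, Prod.fst_sub, Prod.snd_sub]; ring

lemma orient_plucker₃ (a w x y z : Pt) :
    orient a x y * orient w y z = orient a y z * orient w x y + orient a w y * orient x y z := by
  simp only [orient, cross2, Prod.fst_sub, Prod.snd_sub]; ring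

lemma orient_plucker₄ (a w x y z : Pt) :
    orient a x z * orient w y z = orient a y z * orient w x z + orient a w z * orient x y z := by
  simp only [orient, cross2, Prod.fst_sub, Prod.snd_sub]; ring

lemma sign_of_combination {a b c r s t : ℝ} (ha : a < 0) (hb : b < 0) (hc : c < 0)
    (h : a * t = b * r + c * s) :
    (0 < r → 0 < s → 0 < t) ∧ (¬0 < r → ¬0 < s → ¬0 < t) := by
  simp only [not_lt]
  constructor <;> intro hr hs
  · exact (neg_iff_pos_of_mul_neg (by nlinarith)).1 ha
  · by_contra! ht
    nlinarith

lemma dotp_self_pos {v : Pt} (hv : v ≠ 0) : 0 < dotp v v := by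
  simp only [dotp]
  refine (add_nonneg (mul_self_nonneg _) (mul_self_nonneg _)).lt_of_ne' fun h => hv ?_
  obtain ⟨h₁, h₂⟩ := mul_self_add_mul_self_eq_zero.1 h
  exact Prod.ext h₁ h₂

lemma eq_smul_of_cross2_eq_zero {v w : Pt} (hv : v ≠ 0) (h : cross2 v w = 0) :
    w = (dotp v w / dotp v v) • v := by
  rw [div_eq_inv_mul, mul_smul, eq_inv_smul_iff₀ (dotp_self_pos hv).ne']
  simp only [cross2] at h
  ext <;> simp only [dotp, Prod.smul_fst, Prod.smul_snd, smul_eq_mul]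
  · linear_combination -v.2 * h
  · linear_combination v.1 * h

lemma collinear_of_orient_eq_zero {x y z : Pt} (h : orient x y z = 0) :
    Collinear ℝ ({x, y, z} : Set Pt) := by
  by_cases hxy : y = x
  · simpa [hxy] using collinear_pair ℝ x z
  have hz := eq_smul_of_cross2_eq_zero (sub_ne_zero.2 hxy) h
  refine (collinear_iff_of_mem (p₀ := x) (by simp)).2 ⟨y - x, ?_⟩
  rintro p (rfl | rfl | rfl)
  · exact ⟨0, by simp⟩
  · exact ⟨1, by simp⟩
  · exact ⟨_, sub_eq_iff_eq_add.1 hz⟩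

lemma GenPos.orient_ne_zero {P : Set Pt} (hP : GenPos P) {x y z : Pt} (hx : x ∈ P) (hy : y ∈ P)
    (hz : z ∈ P) (hxy : x ≠ y) (hxz : x ≠ z) (hyz : y ≠ z) : orient x y z ≠ 0 :=
  fun h => hP x hx y hy z hz hxy hxz hyz (collinear_of_orient_eq_zero h)

lemma orient_nonneg_of_mem_convexHull {s : Set Pt} {p q x : Pt} (hs : ∀ y ∈ s, 0 ≤ orient p q y)
    (hx : x ∈ convexHull ℝ s) : 0 ≤ orient p q x := by
  have hconv := convex_halfSpace_ge (isLinearMap_cross2 (q - p)) (cross2 (q - p) p)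
  simp only [orient, cross2_sub, sub_nonneg] at hs ⊢
  exact convexHull_min hs hconv hx

lemma orient_pos_of_mem_convexHull {s : Set Pt} {p q x : Pt} (hs : ∀ y ∈ s, 0 < orient p q y)
    (hx : x ∈ convexHull ℝ s) : 0 < orient p q x := by
  have hconv := convex_halfSpace_gt (isLinearMap_cross2 (q - p)) (cross2 (q - p) p)
  simp only [orient, cross2_sub, sub_pos] at hs ⊢
  exact convexHull_min hs hconv hx

end Orientation

/-- The points `a, b, c, d, e` are the vertices of a strictly convex pentagon, listed
counterclockwise. -/
structure ConvexPentagon (a b c d e : Pt) : Prop where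
  abc : 0 < orient a b c
  abd : 0 < orient a b d
  abe : 0 < orient a b e
  acd : 0 < orient a c d
  ace : 0 < orient a c e
  ade : 0 < orient a d e
  bcd : 0 < orient b c d
  bce : 0 < orient b c e
  bde : 0 < orient b d e
  cde : 0 < orient c d e

namespace ConvexPentagon

variable {a b c d e : Pt}

lemma rotate (h : ConvexPentagon a b c d e) : ConvexPentagon b c d e a where
  abc := h.bcd
  abd := h.bce
  abe := by rw [orient_rotate]; exact h.abc
  acd := h.bde
  ace := by rw [orient_rotate]; exact h.abd
  ade := by rw [orient_rotate]; exact h.abe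
  bcd := h.cde
  bce := by rw [orient_rotate]; exact h.acd
  bde := by rw [orient_rotate]; exact h.ace
  cde := by rw [orient_rotate]; exact h.ade

lemma of_quadrilaterals (habc : 0 < orient a b c) (hbcd : 0 < orient b c d)
    (habd : 0 < orient a b d) (hacd : 0 < orient a c d) (hade : 0 < orient a d e)
    (habe : 0 < orient a b e) (hbde : 0 < orient b d e) (hace : 0 < orient a c e)
    (hcde : 0 < orient c d e) : ConvexPentagon a b c d e := by
  refine ⟨habc, habd, habe, hacd, hace, hade, hbcd, ?_, hbde, hcde⟩
  refine (mul_pos_iff_of_pos_left habd).1 ?_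
  rw [orient_plucker₁]
  positivity

lemma ne_next (h : ConvexPentagon a b c d e) : a ≠ b := by
  rintro rfl
  exact (orient_self_left a c ▸ h.abc).false

lemma ne_next_next (h : ConvexPentagon a b c d e) : a ≠ c := by
  rintro rfl
  exact (orient_self_outer a b ▸ h.abc).false

lemma card_eq_five (h : ConvexPentagon a b c d e) : ({a, b, c, d, e} : Finset Pt).card = 5 := by
  have := h.ne_next
  have := h.ne_next_next
  have := h.rotate.ne_next
  have := h.rotate.ne_next_next
  have := h.rotate.rotate.ne_next
  have := h.rotate.rotate.ne_next_next
  have := h.rotate.rotate.rotate.ne_next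
  have := h.rotate.rotate.rotate.ne_next_next
  have := h.rotate.rotate.rotate.rotate.ne_next
  have := h.rotate.rotate.rotate.rotate.ne_next_next
  grind

lemma notMem_convexHull_sdiff (h : ConvexPentagon a b c d e) :
    a ∉ convexHull ℝ ({a, b, c, d, e} \ {a} : Set Pt) := by
  intro ha
  have hside : ∀ y ∈ ({a, b, c, d, e} \ {a} : Set Pt), 0 ≤ orient e b y := by
    rintro y ⟨rfl | rfl | rfl | rfl | rfl, hne⟩
    · exact absurd rfl hne
    · exact (orient_self_right e y).ge
    · exact (orient_rotate e b y ▸ h.bce).le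
    · exact (orient_rotate e b y ▸ h.bde).le
    · exact (orient_self_outer y b).ge
  have := orient_nonneg_of_mem_convexHull hside ha
  rw [← orient_rotate, orient_swap_left] at this
  linarith [h.abe]

lemma insert_rotate {α : Type*} (a b c d e : α) : ({a, b, c, d, e} : Set α) = {b, c, d, e, a} := by
  ext x
  simp only [Set.mem_insert_iff, Set.mem_singleton_iff]
  tauto

lemma convexPos (h : ConvexPentagon a b c d e) : ConvexPos ({a, b, c, d, e} : Set Pt) := by
  rintro p (rfl | rfl | rfl | rfl | rfl)
  · exact h.notMem_convexHull_sdiff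
  all_goals rw [insert_rotate]
  · exact h.rotate.notMem_convexHull_sdiff
  all_goals rw [insert_rotate]
  · exact h.rotate.rotate.notMem_convexHull_sdiff
  all_goals rw [insert_rotate]
  · exact h.rotate.rotate.rotate.notMem_convexHull_sdiff
  · rw [insert_rotate]
    exact h.rotate.rotate.rotate.rotate.notMem_convexHull_sdiff

lemma orient_edge_nonneg (h : ConvexPentagon a b c d e) {p : Pt}
    (hp : p ∈ convexHull ℝ ({a, b, c, d, e} : Set Pt)) : 0 ≤ orient a b p := by
  refine orient_nonneg_of_mem_convexHull ?_ hp
  rintro y (rfl | rfl | rfl | rfl | rfl)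
  exacts [(orient_self_outer y b).ge, (orient_self_right a y).ge, h.abc.le, h.abd.le, h.abe.le]

lemma orient_edges_nonneg (h : ConvexPentagon a b c d e) {p : Pt}
    (hp : p ∈ convexHull ℝ ({a, b, c, d, e} : Set Pt)) :
    0 ≤ orient a b p ∧ 0 ≤ orient b c p ∧ 0 ≤ orient c d p ∧ 0 ≤ orient d e p ∧
      0 ≤ orient e a p := by
  refine ⟨h.orient_edge_nonneg hp, h.rotate.orient_edge_nonneg ?_,
    h.rotate.rotate.orient_edge_nonneg ?_, h.rotate.rotate.rotate.orient_edge_nonneg ?_,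
    h.rotate.rotate.rotate.rotate.orient_edge_nonneg ?_⟩
  · rwa [← insert_rotate]
  · rwa [← insert_rotate, ← insert_rotate]
  · rwa [← insert_rotate, ← insert_rotate, ← insert_rotate]
  · rwa [← insert_rotate, ← insert_rotate, ← insert_rotate, ← insert_rotate]

end ConvexPentagon

/-! ### Signotopes divided by a line -/

namespace DividedSignotope

section Finite

variable {α : Type*}

lemma ncard_sub_one_le_ncard_sdiff_singleton_inter [Finite α] (V s : Set α) (e : α) :
    (V ∩ s).ncard - 1 ≤ (V \ {e} ∩ s).ncard := by
  have : V \ {e} ∩ s = (V ∩ s) \ {e} := by grind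
  rw [this]
  exact Set.pred_ncard_le_ncard_sdiff_singleton _ _

variable [LinearOrder α]

lemma exists_last [Finite α] {P : α → Prop} (hP : ∃ x, P x) : ∃ w, P w ∧ ∀ t, P t → t ≤ w := by
  obtain ⟨w, hw⟩ := (Set.toFinite {x | P x}).exists_maximal hP
  exact ⟨w, hw.prop, fun t ht => (le_total t w).elim id (hw.2 ht)⟩

lemma exists_first [Finite α] {P : α → Prop} (hP : ∃ x, P x) : ∃ w, P w ∧ ∀ t, P t → w ≤ t :=
  exists_last (α := αᵒᵈ) hP

lemma exists_lt_lt_of_ncard_eq_three {s : Set α} (hs : s.ncard = 3) :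
    ∃ x y z, x < y ∧ y < z ∧ s = {x, y, z} := by
  have hfin : s.Finite := Set.finite_of_ncard_ne_zero (by omega)
  rw [Set.ncard_eq_toFinset_card s hfin] at hs
  refine ⟨_, _, _, (hfin.toFinset.orderEmbOfFin hs).strictMono (by decide : (0 : Fin 3) < 1),
    (hfin.toFinset.orderEmbOfFin hs).strictMono (by decide : (1 : Fin 3) < 2), ?_⟩
  have := hfin.toFinset.range_orderEmbOfFin hs
  rw [hfin.coe_toFinset] at this
  refine this.symm.trans ?_
  ext
  rw [Set.mem_range]
  simp [Fin.exists_fin_succ, eq_comm]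

end Finite

end DividedSignotope

/-- A signotope of rank 3 with heights. It abstracts a planar point set divided by a line `ℓ`,
listed clockwise around one of its points, the apex, which a projective map sends to infinity
downwards: for `x < y < z`, the relation `cup x y z` says that `y` lies below the line through `x`
and `z`, and `height` measures the position relative to (the image of) `ℓ`. The relation `cup` is
unconstrained on triples that are not increasing. The six implications `sig` say that along the list
`w x y`, `w x z`, `w y z`, `x y z` the truth value of `cup` changes at most once. -/
structure DividedSignotope (α : Type*) [LinearOrder α] where
  cup : α → α → α → Prop
  height : α → ℝ
  sig : ∀ w x y z, w < x → x < y → y < z →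
    (cup w x y → cup w y z → cup w x z) ∧
    (cup w x y → cup x y z → cup w x z ∧ cup w y z) ∧
    (cup w x z → cup x y z → cup w y z) ∧
    (¬cup w x y → ¬cup w y z → ¬cup w x z) ∧
    (¬cup w x y → ¬cup x y z → ¬cup w x z ∧ ¬cup w y z) ∧
    (¬cup w x z → ¬cup x y z → ¬cup w y z)
  not_cup_of_height_le : ∀ x y z, x < y → y < z → height x ≤ height y → height z ≤ height y →
    ¬cup x y z

namespace DividedSignotope

variable {α : Type*} [LinearOrder α] (G : DividedSignotope α)

/-- The mirror image of a divided signotope. -/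
def dual : DividedSignotope αᵒᵈ where
  cup x y z := G.cup z.ofDual y.ofDual x.ofDual
  height x := G.height x.ofDual
  sig w x y z hwx hxy hyz := by
    obtain ⟨h₁, h₂, h₃, h₄, h₅, h₆⟩ := G.sig z.ofDual y.ofDual x.ofDual w.ofDual hyz hxy hwx
    exact ⟨fun h h' => h₃ h' h, fun h h' => (h₂ h' h).symm, fun h h' => h₁ h' h,
      fun h h' => h₆ h' h, fun h h' => (h₅ h' h).symm, fun h h' => h₄ h' h⟩
  not_cup_of_height_le x y z hxy hyz hx hz := G.not_cup_of_height_le _ _ _ hyz hxy hz hx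

/-- The point `x` lies in `B`, to the right of `ℓ`. -/
def right (x : α) : Prop := 0 < G.height x

lemma not_cup_of_right_mid {x y z : α} (hxy : x < y) (hyz : y < z) (hx : ¬G.right x)
    (hy : G.right y) (hz : ¬G.right z) : ¬G.cup x y z :=
  G.not_cup_of_height_le x y z hxy hyz ((not_lt.1 hx).trans hy.le) ((not_lt.1 hz).trans hy.le)

/-- If `t` lies strictly between `x` and `y`, then it lies above the segment `x y`. -/
def Above (x y t : α) : Prop := x < t → t < y → ¬G.cup x t y

/-- If `t` lies strictly between `x` and `y`, then it lies below the segment `x y`. -/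
def Below (x y t : α) : Prop := x < t → t < y → G.cup x t y

/-- There is no divided 5-hole with vertices in `V ∪ {apex}`. The four fields rule out the
pentagons formed by the apex and a 4-cap, by a 5-cup, by a 4-cup and one point above it, and by a
4-cap and one point below it. Each produces a point of `V` inside the pentagon; for the apex
pentagon, which is unbounded below, the point need only fail to be above its upper boundary.
A 5-cap is omitted, since its first four points form a hole with the apex. -/
structure NoDividedHole (V : Set α) : Prop where
  fan : ∀ w ∈ V, ∀ x ∈ V, ∀ y ∈ V, ∀ z ∈ V, w < x → x < y → y < z →
    ¬G.cup w x y → ¬G.cup x y z → (∃ v ∈ [w, x, y, z], G.right v) →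
    ∃ t ∈ V, ¬(G.Above w x t ∧ G.Above x y t ∧ G.Above y z t)
  cup₅ : ∀ v ∈ V, ∀ w ∈ V, ∀ x ∈ V, ∀ y ∈ V, ∀ z ∈ V, v < w → w < x → x < y → y < z →
    G.cup v w x → G.cup w x y → G.cup x y z →
    (∃ u ∈ [v, w, x, y, z], G.right u) → (∃ u ∈ [v, w, x, y, z], ¬G.right u) →
    ∃ t ∈ V, v < t ∧ t < z ∧ t ∉ [w, x, y] ∧ G.Above v w t ∧ G.Above w x t ∧ G.Above x y t ∧
      G.Above y z t ∧ G.Below v z t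
  cup₄ : ∀ l ∈ V, ∀ x ∈ V, ∀ y ∈ V, ∀ r ∈ V, ∀ u ∈ V, l < x → x < y → y < r → l < u → u < r →
    G.cup l x y → G.cup x y r → ¬G.cup l u r →
    (∃ v ∈ [l, x, y, r, u], G.right v) → (∃ v ∈ [l, x, y, r, u], ¬G.right v) →
    ∃ t ∈ V, l < t ∧ t < r ∧ t ∉ [x, y, u] ∧ G.Above l x t ∧ G.Above x y t ∧ G.Above y r t ∧
      G.Below l u t ∧ G.Below u r t
  cap₄ : ∀ l ∈ V, ∀ x ∈ V, ∀ y ∈ V, ∀ r ∈ V, ∀ m ∈ V, l < x → x < y → y < r → l < m → m < r →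
    ¬G.cup l x y → ¬G.cup x y r → G.cup l m r →
    (∃ v ∈ [l, x, y, r, m], G.right v) → (∃ v ∈ [l, x, y, r, m], ¬G.right v) →
    ∃ t ∈ V, l < t ∧ t < r ∧ t ∉ [x, y, m] ∧ G.Below l x t ∧ G.Below x y t ∧ G.Below y r t ∧
      G.Above l m t ∧ G.Above m r t

variable {G} {V : Set α}

open OrderDual in
lemma NoDividedHole.dual (h : G.NoDividedHole V) : G.dual.NoDividedHole (ofDual ⁻¹' V) where
  fan w hw x hx y hy z hz hwx hxy hyz hc hc' hd := by
    obtain ⟨t, ht, hin⟩ := h.fan z.ofDual hz y.ofDual hy x.ofDual hx w.ofDual hw hyz hxy hwx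
      hc' hc (by change ∃ v ∈ [w, x, y, z], G.right v.ofDual at hd; grind)
    exact ⟨toDual t, ht, fun ⟨h₁, h₂, h₃⟩ => hin ⟨fun a b => h₃ b a, fun a b => h₂ b a,
      fun a b => h₁ b a⟩⟩
  cup₅ v hv w hw x hx y hy z hz hvw hwx hxy hyz h₁ h₂ h₃ hd hd' := by
    obtain ⟨t, ht, hzt, htv, hne, e₁, e₂, e₃, e₄, e₅⟩ := h.cup₅ z.ofDual hz y.ofDual hy x.ofDual hx
      w.ofDual hw v.ofDual hv hyz hxy hwx hvw h₃ h₂ h₁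
      (by change ∃ u ∈ [v, w, x, y, z], G.right u.ofDual at hd; grind)
      (by change ∃ u ∈ [v, w, x, y, z], ¬G.right u.ofDual at hd'; grind)
    exact ⟨toDual t, ht, htv, hzt, by change t ∉ [w.ofDual, x.ofDual, y.ofDual]; grind,
      fun a b => e₄ b a, fun a b => e₃ b a, fun a b => e₂ b a, fun a b => e₁ b a,
      fun a b => e₅ b a⟩
  cup₄ l hl x hx y hy r hr u hu hlx hxy hyr hlu hur h₁ h₂ h₃ hd hd' := by
    obtain ⟨t, ht, hrt, htl, hne, e₁, e₂, e₃, e₄, e₅⟩ := h.cup₄ r.ofDual hr y.ofDual hy x.ofDual hx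
      l.ofDual hl u.ofDual hu hyr hxy hlx hur hlu h₂ h₁ h₃
      (by change ∃ v ∈ [l, x, y, r, u], G.right v.ofDual at hd; grind)
      (by change ∃ v ∈ [l, x, y, r, u], ¬G.right v.ofDual at hd'; grind)
    exact ⟨toDual t, ht, htl, hrt, by change t ∉ [x.ofDual, y.ofDual, u.ofDual]; grind,
      fun a b => e₃ b a, fun a b => e₂ b a, fun a b => e₁ b a, fun a b => e₅ b a,
      fun a b => e₄ b a⟩
  cap₄ l hl x hx y hy r hr m hm hlx hxy hyr hlm hmr h₁ h₂ h₃ hd hd' := by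
    obtain ⟨t, ht, hrt, htl, hne, e₁, e₂, e₃, e₄, e₅⟩ := h.cap₄ r.ofDual hr y.ofDual hy x.ofDual hx
      l.ofDual hl m.ofDual hm hyr hxy hlx hmr hlm h₂ h₁ h₃
      (by change ∃ v ∈ [l, x, y, r, m], G.right v.ofDual at hd; grind)
      (by change ∃ v ∈ [l, x, y, r, m], ¬G.right v.ofDual at hd'; grind)
    exact ⟨toDual t, ht, htl, hrt, by change t ∉ [x.ofDual, y.ofDual, m.ofDual]; grind,
      fun a b => e₃ b a, fun a b => e₂ b a, fun a b => e₁ b a, fun a b => e₅ b a,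
      fun a b => e₄ b a⟩

lemma NoDividedHole.sdiff_singleton (h : G.NoDividedHole V) {e : α}
    (he : ∀ u ∈ V, ∀ v ∈ V, u < e → e < v → ¬G.cup u e v) : G.NoDividedHole (V \ {e}) where
  fan w hw x hx y hy z hz hwx hxy hyz hc hc' hd := by
    obtain ⟨t, ht, hin⟩ := h.fan w hw.1 x hx.1 y hy.1 z hz.1 hwx hxy hyz hc hc' hd
    refine ⟨t, ⟨ht, ?_⟩, hin⟩
    rintro rfl
    exact hin ⟨he w hw.1 x hx.1, he x hx.1 y hy.1, he y hy.1 z hz.1⟩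
  cup₅ v hv w hw x hx y hy z hz hvw hwx hxy hyz h₁ h₂ h₃ hd hd' := by
    obtain ⟨t, ht, hvt, htz, hne, hin⟩ := h.cup₅ v hv.1 w hw.1 x hx.1 y hy.1 z hz.1 hvw hwx hxy hyz
      h₁ h₂ h₃ hd hd'
    refine ⟨t, ⟨ht, ?_⟩, hvt, htz, hne, hin⟩
    rintro rfl
    exact he v hv.1 z hz.1 hvt htz (hin.2.2.2.2 hvt htz)
  cup₄ l hl x hx y hy r hr u hu hlx hxy hyr hlu hur h₁ h₂ h₃ hd hd' := by
    obtain ⟨t, ht, hlt, htr, hne, hin⟩ := h.cup₄ l hl.1 x hx.1 y hy.1 r hr.1 u hu.1 hlx hxy hyr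
      hlu hur h₁ h₂ h₃ hd hd'
    refine ⟨t, ⟨ht, ?_⟩, hlt, htr, hne, hin⟩
    rintro rfl
    rcases lt_trichotomy t u with htu | rfl | hut
    · exact he l hl.1 u hu.1 hlt htu (hin.2.2.2.1 hlt htu)
    · simp at hne
    · exact he u hu.1 r hr.1 hut htr (hin.2.2.2.2 hut htr)
  cap₄ l hl x hx y hy r hr m hm hlx hxy hyr hlm hmr h₁ h₂ h₃ hd hd' := by
    obtain ⟨t, ht, hlt, htr, hne, hin⟩ := h.cap₄ l hl.1 x hx.1 y hy.1 r hr.1 m hm.1 hlx hxy hyr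
      hlm hmr h₁ h₂ h₃ hd hd'
    refine ⟨t, ⟨ht, ?_⟩, hlt, htr, hne, hin⟩
    rintro rfl
    simp only [List.mem_cons, List.not_mem_nil, or_false, not_or] at hne
    rcases lt_or_gt_of_ne hne.1 with htx | hxt
    · exact he l hl.1 x hx.1 hlt htx (hin.1 hlt htx)
    rcases lt_or_gt_of_ne hne.2.1 with hty | hyt
    · exact he x hx.1 y hy.1 hxt hty (hin.2.1 hxt hty)
    · exact he y hy.1 r hr.1 hyt htr (hin.2.2.1 hyt htr)

lemma NoDividedHole.cup_or_cup_of_visible [Finite α] (h : G.NoDividedHole V) {p x y q : α}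
    (hp : p ∈ V) (hx : x ∈ V) (hy : y ∈ V) (hq : q ∈ V) (hpx : p < x) (hxy : x < y) (hyq : y < q)
    (hvis : ∀ t ∈ V, G.Above x y t) (hr : G.right x ∨ G.right y) :
    G.cup p x y ∨ G.cup x y q := by
  by_contra! hc
  obtain ⟨w, ⟨hw, hwx, hwc⟩, hwlast⟩ :=
    exists_last (P := fun w => w ∈ V ∧ w < x ∧ ¬G.cup w x y) ⟨p, hp, hpx, hc.1⟩
  obtain ⟨z, ⟨hz, hyz, hzc⟩, hzfirst⟩ :=
    exists_first (P := fun z => z ∈ V ∧ y < z ∧ ¬G.cup x y z) ⟨q, hq, hyq, hc.2⟩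
  obtain ⟨t, ht, hin⟩ := h.fan w hw x hx y hy z hz hwx hxy hyz hwc hzc (by grind)
  refine hin ⟨fun hwt htx hcup => ?_, hvis t ht, fun hyt htz hcup => ?_⟩
  · have := hwlast t; grind [G.sig w t x y]
  · have := hzfirst t; grind [G.sig x y t z]

variable (G V) in
/-- The points `p` and `q` of `A` span a wedge around the apex with only points of `B` strictly
inside. -/
structure Gap (p q : α) : Prop where
  left_mem : p ∈ V
  right_mem : q ∈ V
  lt : p < q
  not_right_left : ¬G.right p
  not_right_right : ¬G.right q
  right_of_mem : ∀ t ∈ V, p < t → t < q → G.right t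

lemma Gap.inter_Ioo_subset {p q : α} (g : G.Gap V p q) :
    V ∩ Set.Ioo p q ⊆ V ∩ {x | G.right x} :=
  fun x hx => ⟨hx.1, g.right_of_mem x hx.1 hx.2.1 hx.2.2⟩

open OrderDual in
lemma Gap.dual {p q : α} (g : G.Gap V p q) : G.dual.Gap (ofDual ⁻¹' V) (toDual q) (toDual p) :=
  ⟨g.right_mem, g.left_mem, g.lt, g.not_right_right, g.not_right_left,
    fun t ht hq hp => g.right_of_mem t ht hp hq⟩

lemma Gap.cup_left [Finite α] {p q : α} (g : G.Gap V p q) (h : G.NoDividedHole V) {v b : α}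
    (hv : v ∈ V) (hvp : v < p) (hb : b ∈ V) (hpb : p < b) (hbq : b < q) : G.cup v p b := by
  obtain ⟨hp, hq, -, hpl, hql, hgap⟩ := g
  by_contra hc
  obtain ⟨c, ⟨hcV, hpc, hcq, hcc⟩, hfirst⟩ :=
    exists_first (P := fun c => c ∈ V ∧ p < c ∧ c < q ∧ ¬G.cup v p c) ⟨b, hb, hpb, hbq, hc⟩
  have hcr := hgap c hcV hpc hcq
  have hvis : ∀ t ∈ V, G.Above p c t := fun t ht hpt htc htcup => by
    have := hfirst t
    grind [G.sig v p t c]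
  rcases h.cup_or_cup_of_visible hv hp hcV hq hvp hpc hcq hvis (.inr hcr) with h' | h'
  · exact hcc h'
  · exact G.not_cup_of_right_mid hpc hcq hpl hcr hql h'

open OrderDual in
lemma Gap.cup_right [Finite α] {p q : α} (g : G.Gap V p q) (h : G.NoDividedHole V) {v b : α}
    (hv : v ∈ V) (hqv : q < v) (hb : b ∈ V) (hpb : p < b) (hbq : b < q) : G.cup b q v :=
  g.dual.cup_left h.dual (v := toDual v) (b := toDual b) hv hqv hb hbq hpb

lemma Gap.not_cup_of_cup {p q : α} (g : G.Gap V p q) {b c : α} (hb : b ∈ V) (hpb : p < b)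
    (hbc : b < c) (hcq : c < q) (hcup : G.cup p b c) : ¬G.cup b c q := fun h =>
  G.not_cup_of_right_mid hpb (hbc.trans hcq) g.not_right_left
    (g.right_of_mem b hb hpb (hbc.trans hcq)) g.not_right_right
    ((G.sig p b c q hpb hbc hcq).2.1 hcup h).1

lemma NoDividedHole.cup_of_slide [Finite α] (h : G.NoDividedHole V) {p x y u : α} (hp : p ∈ V)
    (hx : x ∈ V) (hy : y ∈ V) (hu : u ∈ V) (hpx : p < x) (hxy : x < y) (hpu : p < u) (huy : u < y)
    (hpl : ¬G.right p) (hxr : G.right x) (hempty : ∀ t ∈ V, p < t → t < y → t = x ∨ t = u)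
    (hpxy : G.cup p x y) (hcorner : ∀ q ∈ V, q < p → G.cup q p x) {q : α} (hq : q ∈ V)
    (hqp : q < p) : G.cup q u y := by
  by_contra hc
  obtain ⟨l, ⟨hl, hlp, hlc⟩, hlast⟩ :=
    exists_last (P := fun l => l ∈ V ∧ l < p ∧ ¬G.cup l u y) ⟨q, hq, hqp, hc⟩
  obtain ⟨t, ht, hlt, hty, hne, hin⟩ := h.cup₄ l hl p hp x hx y hy u hu hlp hpx hxy (by order) huy
    (hcorner l hl hlp) hpxy hlc (by grind) (by grind)
  have htp : t < p := by
    have := hempty t ht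
    grind
  have htuy : G.cup t u y := by
    have := hlast t
    grind
  have hltu := hin.2.2.2.1 hlt (htp.trans hpu)
  grind [G.sig l t u y]

open OrderDual in
lemma NoDividedHole.cup_of_slide_right [Finite α] (h : G.NoDividedHole V) {q x y u : α} (hq : q ∈ V)
    (hx : x ∈ V) (hy : y ∈ V) (hu : u ∈ V) (hyx : y < x) (hxq : x < q) (hyu : y < u) (huq : u < q)
    (hql : ¬G.right q) (hxr : G.right x) (hempty : ∀ t ∈ V, y < t → t < q → t = x ∨ t = u)
    (hyxq : G.cup y x q) (hcorner : ∀ r ∈ V, q < r → G.cup x q r) {r : α} (hr : r ∈ V)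
    (hqr : q < r) : G.cup y u r :=
  h.dual.cup_of_slide (p := toDual q) (x := toDual x) (y := toDual y) (u := toDual u)
    (q := toDual r) hq hx hy hu hxq hyx huq hyu hql hxr (fun t ht a b => hempty t ht b a) hyxq
    hcorner hr hqr

variable (G V) in
/-- A gap between `p` and `q` containing exactly the three points `b₁ < b₂ < b₃`. -/
structure Triple (p b₁ b₂ b₃ q : α) : Prop extends G.Gap V p q where
  mem₁ : b₁ ∈ V
  mem₂ : b₂ ∈ V
  mem₃ : b₃ ∈ V
  lt₁ : p < b₁
  lt₂ : b₁ < b₂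
  lt₃ : b₂ < b₃
  lt₄ : b₃ < q
  le_or_eq_or_le : ∀ t ∈ V, t ≤ p ∨ t = b₁ ∨ t = b₂ ∨ t = b₃ ∨ q ≤ t

namespace Triple

variable {p b₁ b₂ b₃ q : α}

open OrderDual in
lemma dual (T : G.Triple V p b₁ b₂ b₃ q) :
    G.dual.Triple (ofDual ⁻¹' V) (toDual q) (toDual b₃) (toDual b₂) (toDual b₁) (toDual p) where
  __ := T.toGap.dual
  mem₁ := T.mem₃
  mem₂ := T.mem₂
  mem₃ := T.mem₁
  lt₁ := T.lt₄
  lt₂ := T.lt₃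
  lt₃ := T.lt₂
  lt₄ := T.lt₁
  le_or_eq_or_le t ht := by
    rcases T.le_or_eq_or_le t.ofDual ht with h | h | h | h | h
    exacts [.inr (.inr (.inr (.inr h))), .inr (.inr (.inr (.inl h))), .inr (.inr (.inl h)),
      .inr (.inl h), .inl h]

lemma lt_chain (T : G.Triple V p b₁ b₂ b₃ q) : p < b₁ ∧ b₁ < b₂ ∧ b₂ < b₃ ∧ b₃ < q :=
  ⟨T.lt₁, T.lt₂, T.lt₃, T.lt₄⟩

lemma right₁ (T : G.Triple V p b₁ b₂ b₃ q) : G.right b₁ :=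
  T.right_of_mem _ T.mem₁ T.lt₁ (T.lt₂.trans (T.lt₃.trans T.lt₄))

lemma right₂ (T : G.Triple V p b₁ b₂ b₃ q) : G.right b₂ :=
  T.right_of_mem _ T.mem₂ (T.lt₁.trans T.lt₂) (T.lt₃.trans T.lt₄)

lemma right₃ (T : G.Triple V p b₁ b₂ b₃ q) : G.right b₃ :=
  T.right_of_mem _ T.mem₃ (T.lt₁.trans (T.lt₂.trans T.lt₃)) T.lt₄

variable [Finite α]

/- If no point of `V` lies below the segment `bᵢ bⱼ`, then `p` or `q` lies above the line `bᵢ bⱼ`.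
The names below call the first case *left* (`cup p bᵢ bⱼ`) and the second *right*
(`cup bᵢ bⱼ q`). -/
lemma cup_left_or_cup_right₁₂ (T : G.Triple V p b₁ b₂ b₃ q) (h : G.NoDividedHole V) :
    G.cup p b₁ b₂ ∨ G.cup b₁ b₂ q :=
  h.cup_or_cup_of_visible T.left_mem T.mem₁ T.mem₂ T.right_mem T.lt₁ T.lt₂ (T.lt₃.trans T.lt₄)
    (fun t ht _ _ => by grind [T.le_or_eq_or_le t ht, T.lt₁, T.lt₂, T.lt₃, T.lt₄]) (.inl T.right₁)

lemma cup_left_or_cup_right₂₃ (T : G.Triple V p b₁ b₂ b₃ q) (h : G.NoDividedHole V) :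
    G.cup p b₂ b₃ ∨ G.cup b₂ b₃ q :=
  h.cup_or_cup_of_visible T.left_mem T.mem₂ T.mem₃ T.right_mem (T.lt₁.trans T.lt₂) T.lt₃ T.lt₄
    (fun t ht _ _ => by grind [T.le_or_eq_or_le t ht, T.lt₁, T.lt₂, T.lt₃, T.lt₄]) (.inl T.right₂)

lemma cup_left_or_cup_right₁₃ (T : G.Triple V p b₁ b₂ b₃ q) (h : G.NoDividedHole V)
    (hcap : ¬G.cup b₁ b₂ b₃) : G.cup p b₁ b₃ ∨ G.cup b₁ b₃ q :=
  h.cup_or_cup_of_visible T.left_mem T.mem₁ T.mem₃ T.right_mem T.lt₁ (T.lt₂.trans T.lt₃) T.lt₄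
    (fun t ht _ _ => by grind [T.le_or_eq_or_le t ht, T.lt₁, T.lt₂, T.lt₃, T.lt₄]) (.inl T.right₁)

lemma cup_of_cup_left (T : G.Triple V p b₁ b₂ b₃ q) (h : G.NoDividedHole V)
    (h₂₃ : G.cup p b₂ b₃) : G.cup b₁ b₂ b₃ := by
  refine (h.cup_or_cup_of_visible T.mem₁ T.mem₂ T.mem₃ T.right_mem T.lt₂ T.lt₃ T.lt₄
    (fun t ht _ _ => ?_) (.inl T.right₂)).elim id fun h' => ?_
  · grind [T.le_or_eq_or_le t ht, T.lt₁, T.lt₂, T.lt₃, T.lt₄]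
  · exact absurd h' (T.toGap.not_cup_of_cup T.mem₂ (T.lt₁.trans T.lt₂) T.lt₃ T.lt₄ h₂₃)

lemma cup_of_cup_left_right (T : G.Triple V p b₁ b₂ b₃ q) (h : G.NoDividedHole V) {r : α}
    (hr : r ∈ V) (hqr : q < r) (hrl : ¬G.right r) (h₁₂ : G.cup p b₁ b₂) (h₂₃ : G.cup b₂ b₃ q) :
    G.cup p b₁ b₃ := by
  have ⟨l₁, l₂, l₃, l₄⟩ := T.lt_chain
  by_contra h₁₃
  have hcap : ¬G.cup b₁ b₂ b₃ := fun h' => T.toGap.not_cup_of_cup T.mem₁ l₁ l₂ (by order) h₁₂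
    ((G.sig b₁ b₂ b₃ q l₂ l₃ l₄).2.1 h' h₂₃).1
  have h₁₃q := (T.cup_left_or_cup_right₁₃ h hcap).resolve_left h₁₃
  have h₁₂r := h.cup_of_slide_right T.right_mem T.mem₃ T.mem₁ T.mem₂ (by order) l₄ l₂ (by order)
    T.not_right_right T.right₃ (fun t ht _ _ => by grind [T.le_or_eq_or_le t ht]) h₁₃q
    (fun r hr hqr => T.toGap.cup_right h hr hqr T.mem₃ (by order) l₄) hr hqr
  have := G.not_cup_of_right_mid l₁ (by order) T.not_right_left T.right₁ hrl
  exact this ((G.sig p b₁ b₂ r l₁ l₂ (by order)).2.1 h₁₂ h₁₂r).1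

lemma cup_of_cup_right_left (T : G.Triple V p b₁ b₂ b₃ q) (h : G.NoDividedHole V) {r : α}
    (hr : r ∈ V) (hqr : q < r) (h₁₂ : G.cup b₁ b₂ q) : G.cup b₁ b₃ r := by
  have ⟨l₁, l₂, l₃, l₄⟩ := T.lt_chain
  exact h.cup_of_slide_right T.right_mem T.mem₂ T.mem₁ T.mem₃ l₂ (by order) (by order) l₄
    T.not_right_right T.right₂ (fun t ht _ _ => by grind [T.le_or_eq_or_le t ht]) h₁₂
    (fun r hr hqr => T.toGap.cup_right h hr hqr T.mem₂ (by order) (by order)) hr hqr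

lemma not_cup_right_right (T : G.Triple V p b₁ b₂ b₃ q) (h : G.NoDividedHole V) {r : α}
    (hr : r ∈ V) (hqr : q < r) (h₁₂ : G.cup b₁ b₂ q) : ¬G.cup b₂ b₃ q := by
  intro h₂₃
  have ⟨l₁, l₂, l₃, l₄⟩ := T.lt_chain
  by_cases hcap : G.cup b₁ b₂ b₃
  · obtain ⟨s, ⟨hs, hqs⟩, hfirst⟩ := exists_first (P := fun s => s ∈ V ∧ q < s) ⟨r, hr, hqr⟩
    obtain ⟨t, ht, hlt, hts, hne, -⟩ := h.cup₅ b₁ T.mem₁ b₂ T.mem₂ b₃ T.mem₃ q T.right_mem s hs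
      l₂ l₃ l₄ hqs hcap h₂₃ (T.toGap.cup_right h hs hqs T.mem₃ (by order) l₄)
      ⟨b₁, by simp, T.right₁⟩ ⟨q, by simp, T.not_right_right⟩
    have := T.le_or_eq_or_le t ht
    have := hfirst t
    grind
  · refine (h.cup_or_cup_of_visible T.left_mem T.mem₁ T.mem₂ T.mem₃ l₁ l₂ l₃
      (fun t ht _ _ => ?_) (.inl T.right₁)).elim (fun h' => ?_) hcap
    · grind [T.le_or_eq_or_le t ht, T.lt₁, T.lt₂, T.lt₃, T.lt₄]
    · exact T.toGap.not_cup_of_cup T.mem₁ l₁ l₂ (by order) h' h₁₂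

lemma not_cup_of_cup_left_left (T : G.Triple V p b₁ b₂ b₃ q) (h : G.NoDividedHole V)
    (h₁₂ : G.cup p b₁ b₂) (h₂₃ : G.cup p b₂ b₃) {r : α} (hr : r ∈ V) (hqr : q < r) :
    ¬G.cup b₂ b₃ r := by
  have ⟨l₁, l₂, l₃, l₄⟩ := T.lt_chain
  intro hcup
  obtain ⟨r, ⟨hr, hqr, hcup⟩, hfirst⟩ :=
    exists_first (P := fun r => r ∈ V ∧ q < r ∧ G.cup b₂ b₃ r) ⟨r, hr, hqr, hcup⟩
  obtain ⟨t, ht, hlt, htr, hne, hin⟩ := h.cup₅ p T.left_mem b₁ T.mem₁ b₂ T.mem₂ b₃ T.mem₃ r hr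
    l₁ l₂ l₃ (by order) h₁₂ (T.cup_of_cup_left h h₂₃) hcup ⟨b₁, by simp, T.right₁⟩
    ⟨p, by simp, T.not_right_left⟩
  have hqt : q ≤ t := by grind [T.le_or_eq_or_le t ht]
  have hb₃ : ¬G.cup b₃ t r := hin.2.2.2.1 (by order) htr
  rcases hqt.eq_or_lt with rfl | hqt
  · exact hb₃ (T.cup_right h hr hqr T.mem₃ (by order) l₄)
  · have := hfirst t
    grind [G.sig b₂ b₃ t r]

end Triple

open OrderDual in
lemma Triple.false_of_lt_of_gt [Finite α] {p b₁ b₂ b₃ q : α} (T : G.Triple V p b₁ b₂ b₃ q)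
    (h : G.NoDividedHole V) {v r : α} (hv : v ∈ V) (hvp : v < p) (hvl : ¬G.right v) (hr : r ∈ V)
    (hqr : q < r) (hrl : ¬G.right r) : False := by
  have ⟨l₁, l₂, l₃, l₄⟩ := T.lt_chain
  rcases T.cup_left_or_cup_right₁₂ h with h₁₂ | h₁₂ <;>
    rcases T.cup_left_or_cup_right₂₃ h with h₂₃ | h₂₃
  · exact T.dual.not_cup_right_right h.dual (r := toDual v) hv hvp h₂₃ h₁₂
  · exact T.toGap.not_cup_of_cup T.mem₁ l₁ (by order : b₁ < b₃) l₄
      (T.cup_of_cup_left_right h hr hqr hrl h₁₂ h₂₃)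
      (T.dual.cup_of_cup_left_right h.dual (r := toDual v) hv hvp hvl h₂₃ h₁₂)
  · have hv₁₃ : G.cup v b₁ b₃ := T.dual.cup_of_cup_right_left h.dual (r := toDual v) hv hvp h₂₃
    exact G.not_cup_of_right_mid (hvp.trans l₁) (by order) hvl T.right₁ hrl
      ((G.sig v b₁ b₃ r (hvp.trans l₁) (by order) (by order)).2.1 hv₁₃
        (T.cup_of_cup_right_left h hr hqr h₁₂)).1
  · exact T.not_cup_right_right h hr hqr h₁₂ h₂₃

lemma Gap.exists_triple {p q : α} (g : G.Gap V p q) (hcard : (V ∩ Set.Ioo p q).ncard = 3) :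
    ∃ b₁ b₂ b₃, G.Triple V p b₁ b₂ b₃ q := by
  obtain ⟨b₁, b₂, b₃, h₁₂, h₂₃, hV⟩ := exists_lt_lt_of_ncard_eq_three hcard
  have hmem : ∀ t, t ∈ V ∩ Set.Ioo p q ↔ t = b₁ ∨ t = b₂ ∨ t = b₃ := by simp [hV]
  have h₁ := (hmem b₁).2 (.inl rfl)
  have h₂ := (hmem b₂).2 (.inr (.inl rfl))
  have h₃ := (hmem b₃).2 (.inr (.inr rfl))
  exact ⟨b₁, b₂, b₃, g, h₁.1, h₂.1, h₃.1, h₁.2.1, h₁₂, h₂₃, h₃.2.2, fun t ht => by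
    grind [hmem t]⟩

variable (V) in
lemma exists_extreme [Finite α] (hV : ∃ x ∈ V, G.right x) :
    ∃ e ∈ V, G.right e ∧ ∀ u ∈ V, ∀ v ∈ V, u < e → e < v → ¬G.cup u e v := by
  obtain ⟨x, hx, hxr⟩ := hV
  obtain ⟨e, he, hmax⟩ := V.exists_max_image G.height V.toFinite ⟨x, hx⟩
  exact ⟨e, he, lt_of_lt_of_le hxr (hmax x hx), fun u hu v hv hue hev =>
    G.not_cup_of_height_le u e v hue hev (hmax u hu) (hmax v hv)⟩

variable (G V) in
/-- Three consecutive gaps, spanned by `p₀ < p₁ < p₂ < p₃`, that together exhaust `V`. -/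
structure Frame (p₀ p₁ p₂ p₃ : α) : Prop where
  gap₀ : G.Gap V p₀ p₁
  gap₁ : G.Gap V p₁ p₂
  gap₂ : G.Gap V p₂ p₃
  mem_Icc : ∀ t ∈ V, t ∈ Set.Icc p₀ p₃

lemma Gap.sdiff_singleton {p q e : α} (g : G.Gap V p q) (he : G.right e) :
    G.Gap (V \ {e}) p q :=
  ⟨⟨g.left_mem, by rintro rfl; exact g.not_right_left he⟩,
    ⟨g.right_mem, by rintro rfl; exact g.not_right_right he⟩, g.lt, g.not_right_left,
    g.not_right_right, fun t ht => g.right_of_mem t ht.1⟩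

namespace Frame

variable {p₀ p₁ p₂ p₃ : α}

open OrderDual in
lemma dual (F : G.Frame V p₀ p₁ p₂ p₃) :
    G.dual.Frame (ofDual ⁻¹' V) (toDual p₃) (toDual p₂) (toDual p₁) (toDual p₀) :=
  ⟨F.gap₂.dual, F.gap₁.dual, F.gap₀.dual, fun t ht => (F.mem_Icc t.ofDual ht).symm⟩

lemma sdiff_singleton (F : G.Frame V p₀ p₁ p₂ p₃) {e : α} (he : G.right e) :
    G.Frame (V \ {e}) p₀ p₁ p₂ p₃ :=
  ⟨F.gap₀.sdiff_singleton he, F.gap₁.sdiff_singleton he, F.gap₂.sdiff_singleton he,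
    fun t ht => F.mem_Icc t ht.1⟩

lemma lt_or_mem_Ioo_of_right (F : G.Frame V p₀ p₁ p₂ p₃) {r : α} (hr : r ∈ V) (hrr : G.right r) :
    r < p₂ ∨ p₂ < r ∧ r < p₃ := by
  have := F.mem_Icc r hr
  have := F.gap₁.not_right_right
  have := F.gap₂.not_right_right
  grind

lemma lt_of_right_of_notMem (F : G.Frame V p₀ p₁ p₂ p₃) {r : α} (hr : r ∈ V) (hrr : G.right r)
    (hrp : r ∉ V ∩ Set.Ioo p₀ p₁) : p₁ < r := by
  have := F.mem_Icc r hr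
  have := F.gap₀.not_right_left
  have := F.gap₀.not_right_right
  grind

variable [Finite α]

lemma ncard_middle_le_two (F : G.Frame V p₀ p₁ p₂ p₃) (h : G.NoDividedHole V) :
    (V ∩ Set.Ioo p₁ p₂).ncard ≤ 2 := by
  induction hn : V.ncard generalizing V with
  | zero => exact ((Set.ncard_le_ncard Set.inter_subset_left).trans hn.le).trans (by norm_num)
  | succ n ih =>
    by_contra! hcard
    obtain ⟨x, hx⟩ := Set.nonempty_of_ncard_ne_zero (by omega : (V ∩ Set.Ioo p₁ p₂).ncard ≠ 0)
    obtain ⟨e, heV, her, he⟩ := G.exists_extreme V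
      ⟨x, hx.1, F.gap₁.right_of_mem x hx.1 hx.2.1 hx.2.2⟩
    have := ih (F.sdiff_singleton her) (h.sdiff_singleton he)
      (by rw [Set.ncard_sdiff_singleton_of_mem heV]; omega)
    have := ncard_sub_one_le_ncard_sdiff_singleton_inter V (Set.Ioo p₁ p₂) e
    obtain ⟨b₁, b₂, b₃, T⟩ := F.gap₁.exists_triple (by omega)
    exact T.false_of_lt_of_gt h F.gap₀.left_mem F.gap₀.lt F.gap₀.not_right_left F.gap₂.right_mem
      F.gap₂.lt F.gap₂.not_right_right

end Frame

lemma exists_lowest_from [Finite α] {b : α} {P : α → Prop} (hP : ∃ x, P x)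
    (hb : ∀ x, P x → b < x) : ∃ y, P y ∧
      (∀ t, P t → t < y → ¬G.cup b t y) ∧ ∀ t, P t → y < t → G.cup b y t := by
  obtain ⟨z, hz, hzlast⟩ := exists_last hP
  obtain ⟨y, ⟨hy, hsuff⟩, hfirst⟩ := exists_first
    (P := fun r => P r ∧ ∀ t, P t → r < t → G.cup b r t)
    ⟨z, hz, fun t ht hzt => absurd (hzlast t ht) hzt.not_ge⟩
  refine ⟨y, hy, fun t ht hty hcup => ?_, hsuff⟩
  obtain ⟨s, ⟨hs, hsy, hscup⟩, hslast⟩ := exists_last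
    (P := fun s => P s ∧ s < y ∧ G.cup b s y) ⟨t, ht, hty, hcup⟩
  refine hsy.not_ge (hfirst s ⟨hs, fun u hu hsu => ?_⟩)
  have := hb s hs
  rcases lt_trichotomy u y with huy | rfl | hyu
  · have := hslast u
    grind [G.sig b s u y]
  · exact hscup
  · exact (G.sig b s y u this hsy hyu).1 hscup (hsuff u hu hyu)

lemma Triple.cup_corner [Finite α] {p b₁ b₂ b₃ q : α} (T : G.Triple V p b₁ b₂ b₃ q)
    (h : G.NoDividedHole V) {r : α} (hr : r ∈ V) (hqr : q < r) :
    G.cup b₁ q r ∧ G.cup b₂ q r ∧ G.cup b₃ q r := by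
  have ⟨l₁, l₂, l₃, l₄⟩ := T.lt_chain
  exact ⟨T.cup_right h hr hqr T.mem₁ l₁ (by order),
    T.cup_right h hr hqr T.mem₂ (by order) (by order), T.cup_right h hr hqr T.mem₃ (by order) l₄⟩

namespace Frame

variable {p₀ p₁ p₂ p₃ b₁ b₂ b₃ : α}

lemma mem_cases (F : G.Frame V p₀ p₁ p₂ p₃) (T : G.Triple V p₀ b₁ b₂ b₃ p₁) {t : α}
    (ht : t ∈ V) :
    t = p₀ ∨ t = b₁ ∨ t = b₂ ∨ t = b₃ ∨ t = p₁ ∨ (p₁ < t ∧ t < p₂) ∨ t = p₂ ∨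
      (p₂ < t ∧ t < p₃) ∨ t = p₃ := by
  have := T.le_or_eq_or_le t ht
  have := F.mem_Icc t ht
  grind

lemma lt_chain (F : G.Frame V p₀ p₁ p₂ p₃) (T : G.Triple V p₀ b₁ b₂ b₃ p₁) :
    p₀ < b₁ ∧ b₁ < b₂ ∧ b₂ < b₃ ∧ b₃ < p₁ ∧ p₁ < p₂ ∧ p₂ < p₃ :=
  ⟨T.lt₁, T.lt₂, T.lt₃, T.lt₄, F.gap₁.lt, F.gap₂.lt⟩

variable [Finite α]

lemma exists_next (F : G.Frame V p₀ p₁ p₂ p₃) : ∃ x ∈ V, p₂ < x ∧ ∀ t ∈ V, p₂ < t → x ≤ t := by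
  obtain ⟨x, ⟨hx, hpx⟩, hfirst⟩ := exists_first (P := fun x => x ∈ V ∧ p₂ < x)
    ⟨p₃, F.gap₂.right_mem, F.gap₂.lt⟩
  exact ⟨x, hx, hpx, fun t ht hpt => hfirst t ⟨ht, hpt⟩⟩

lemma cup_of_forall_cup (F : G.Frame V p₀ p₁ p₂ p₃) (T : G.Triple V p₀ b₁ b₂ b₃ p₁)
    (h : G.NoDividedHole V) (hmid : ∀ c ∈ V, p₁ < c → c < p₂ → G.cup b₂ b₃ c) {d : α} (hd : d ∈ V)
    (hpd : p₂ < d) (hdp : d < p₃) : G.cup b₂ b₃ d := by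
  obtain ⟨l₁, l₂, l₃, l₄, l₅, -⟩ := F.lt_chain T
  by_contra hcap
  obtain ⟨d, ⟨hd, hpd, hdp, hcap⟩, hfirst⟩ := exists_first
    (P := fun d => d ∈ V ∧ p₂ < d ∧ d < p₃ ∧ ¬G.cup b₂ b₃ d) ⟨d, hd, hpd, hdp, hcap⟩
  obtain ⟨t, ht, hlt, htd, hne, hin⟩ := h.cup₄ b₂ T.mem₂ p₁ T.right_mem p₂ F.gap₁.right_mem d hd
    b₃ T.mem₃ (by order) l₅ hpd l₃ (by order)
    (T.cup_corner h F.gap₁.right_mem l₅).2.1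
    (F.gap₂.cup_left h F.gap₁.left_mem l₅ hd hpd hdp) hcap ⟨b₂, by simp, T.right₂⟩
    ⟨p₁, by simp, T.not_right_right⟩
  have hb₃t : b₃ < t := by grind [F.mem_cases T ht]
  have hcup : G.cup b₂ b₃ t := by
    have := F.mem_cases T ht
    have := hmid t ht
    have := hfirst t
    grind
  grind [G.sig b₂ b₃ t d, Below]

lemma cup_of_lowest (F : G.Frame V p₀ p₁ p₂ p₃) (T : G.Triple V p₀ b₁ b₂ b₃ p₁)
    (h : G.NoDividedHole V) {c : α} (hc : c ∈ V) (hpc : p₁ < c) (hcp : c < p₂)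
    (hlow : ∀ t ∈ V, c < t → t < p₂ → G.cup b₃ c t)
    (hlow' : ∀ t ∈ V, p₁ < t → t < c → ¬G.cup b₃ t c) (hcap : ¬G.cup b₂ b₃ c) : G.cup b₃ c p₂ := by
  have ⟨l₁, l₂, l₃, l₄, l₅, l₆⟩ := F.lt_chain T
  by_contra hcap'
  obtain ⟨t, ht, hlt, htd, hne, hin⟩ := h.cap₄ b₂ T.mem₂ b₃ T.mem₃ c hc p₂ F.gap₁.right_mem
    p₁ T.right_mem l₃ (by order) hcp (by order) l₅ hcap hcap'
    (T.cup_corner h F.gap₁.right_mem l₅).2.1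
    ⟨b₂, by simp, T.right₂⟩ ⟨p₁, by simp, T.not_right_right⟩
  have hpt : p₁ < t := by grind [F.mem_cases T ht]
  rcases lt_trichotomy t c with htc | rfl | hct
  · exact hlow' t ht hpt htc (hin.2.1 (by order) htc)
  · simp at hne
  · exact hcap' ((G.sig b₃ c t p₂ (by order) hct htd).2.1 (hlow t ht hct htd)
      (hin.2.2.1 hct htd)).1

lemma false_of_left_left_of_eq (F : G.Frame V p₀ p₁ p₂ p₃) (T : G.Triple V p₀ b₁ b₂ b₃ p₁)
    (h : G.NoDividedHole V) (h₁₂ : G.cup p₀ b₁ b₂) (h₂₃ : G.cup p₀ b₂ b₃) {c : α} (hc : c ∈ V)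
    (hpc : p₁ < c) (hcp : c < p₂) (hmid : ∀ t ∈ V, p₁ < t → t < p₂ → t = c) : False := by
  have ⟨l₁, l₂, l₃, l₄, l₅, l₆⟩ := F.lt_chain T
  obtain ⟨x, hx, hpx, hfirst⟩ := F.exists_next
  have h₂₃c := T.not_cup_of_cup_left_left h h₁₂ h₂₃ hc hpc
  have h₃cp : G.cup b₃ c p₂ := F.cup_of_lowest T h hc hpc hcp (by grind) (by grind) h₂₃c
  have hp₀₃c : ¬G.cup p₀ b₃ c := fun h' => G.not_cup_of_right_mid (by order) (by order)
    T.not_right_left T.right₃ F.gap₁.not_right_right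
    ((G.sig p₀ b₃ c p₂ (by order) (by order) hcp).2.1 h' h₃cp).1
  have h₂cp : ¬G.cup b₂ c p₂ := fun h₂cp => by
    obtain ⟨t, ht, hlt, htr, hne, hin⟩ := h.cup₄ b₂ T.mem₂ c hc p₂ F.gap₁.right_mem x hx b₃ T.mem₃
      (by order) hcp hpx l₃ (by order) h₂cp (F.gap₁.cup_right h hx hpx hc hpc hcp)
      (T.not_cup_of_cup_left_left h h₁₂ h₂₃ hx (by order)) ⟨b₂, by simp, T.right₂⟩
      ⟨p₂, by simp, F.gap₁.not_right_right⟩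
    have := (T.cup_corner h hc hpc).2.1
    grind [F.mem_cases T ht, Above]
  have h₁₂c : G.cup b₁ b₂ c := by
    by_contra h₁₂c
    obtain ⟨t, ht, hlt, htr, hne, hin⟩ := h.cap₄ b₁ T.mem₁ b₂ T.mem₂ c hc p₂ F.gap₁.right_mem p₁
      T.right_mem l₂ (by order) hcp (by order) l₅ h₁₂c h₂cp
      (T.cup_corner h F.gap₁.right_mem l₅).1 ⟨b₂, by simp, T.right₂⟩
      ⟨p₂, by simp, F.gap₁.not_right_right⟩
    grind [F.mem_cases T ht, Below]
  obtain ⟨t, ht, hlt, htr, hne, hin⟩ := h.cup₄ p₀ T.left_mem b₁ T.mem₁ b₂ T.mem₂ c hc b₃ T.mem₃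
    l₁ l₂ (by order) (by order) (by order) h₁₂ h₁₂c hp₀₃c ⟨b₂, by simp, T.right₂⟩
    ⟨p₀, by simp, T.not_right_left⟩
  have := (T.cup_corner h hc hpc).2.1
  grind [F.mem_cases T ht, Above]

lemma false_of_left_left_of_eq_or_eq (F : G.Frame V p₀ p₁ p₂ p₃)
    (T : G.Triple V p₀ b₁ b₂ b₃ p₁) (h : G.NoDividedHole V) (h₁₂ : G.cup p₀ b₁ b₂)
    (h₂₃ : G.cup p₀ b₂ b₃) {c₁ c₂ : α} (hc₁ : c₁ ∈ V) (hc₂ : c₂ ∈ V) (hpc : p₁ < c₁)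
    (hcc : c₁ < c₂) (hcp : c₂ < p₂) (hmid : ∀ t ∈ V, p₁ < t → t < p₂ → t = c₁ ∨ t = c₂) :
    False := by
  obtain ⟨l₁, l₂, l₃, l₄, -, l₆⟩ := F.lt_chain T
  obtain ⟨x, hx, hpx, hfirst⟩ := F.exists_next
  have h₂₃r : ∀ r ∈ V, p₁ < r → ¬G.cup b₂ b₃ r := fun r =>
    T.not_cup_of_cup_left_left h h₁₂ h₂₃
  have hpcc : ¬G.cup p₁ c₁ c₂ := fun hpcc => by
    obtain ⟨t, ht, hlt, htr, hne, -⟩ := h.cup₄ b₂ T.mem₂ p₁ T.right_mem c₁ hc₁ c₂ hc₂ b₃ T.mem₃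
      (by order) hpc hcc l₃ (by order) (T.cup_corner h hc₁ hpc).2.1 hpcc
      (h₂₃r c₂ hc₂ (by order)) ⟨b₂, by simp, T.right₂⟩ ⟨p₁, by simp, T.not_right_right⟩
    grind [F.mem_cases T ht]
  have hccp : G.cup c₁ c₂ p₂ := (h.cup_or_cup_of_visible T.right_mem hc₁ hc₂ F.gap₁.right_mem hpc
    hcc hcp (by grind [Above]) (.inl (F.gap₁.right_of_mem c₁ hc₁ hpc (by order)))).resolve_left hpcc
  have h₃cc : ¬G.cup b₃ c₁ c₂ := fun h₃cc => by
    obtain ⟨t, ht, hlt, htr, hne, hin⟩ := h.cup₅ b₃ T.mem₃ c₁ hc₁ c₂ hc₂ p₂ F.gap₁.right_mem x hx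
      (by order) hcc hcp hpx h₃cc hccp (F.gap₁.cup_right h hx hpx hc₂ (by order) hcp)
      ⟨b₃, by simp, T.right₃⟩ ⟨p₂, by simp, F.gap₁.not_right_right⟩
    have := (T.cup_corner h hc₁ hpc).2.2
    grind [F.mem_cases T ht, Above]
  obtain ⟨t, ht, hlt, htr, hne, -⟩ := h.cap₄ b₂ T.mem₂ b₃ T.mem₃ c₁ hc₁ c₂ hc₂ p₁
    T.right_mem l₃ (by order) hcc (by order) (by order) (h₂₃r c₁ hc₁ hpc) h₃cc
    (T.cup_corner h hc₂ (by order)).2.1 ⟨b₂, by simp, T.right₂⟩ ⟨p₁, by simp, T.not_right_right⟩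
  grind [F.mem_cases T ht]

lemma false_of_left_right_of_forall (F : G.Frame V p₀ p₁ p₂ p₃) (T : G.Triple V p₀ b₁ b₂ b₃ p₁)
    (h : G.NoDividedHole V) (h₂₃ : G.cup b₂ b₃ p₁) {d : α} (hd : d ∈ V) (hpd : p₂ < d)
    (hdp : d < p₃) (hmid : ∀ t ∈ V, p₁ < t → t < p₂ → False) : False := by
  obtain ⟨l₁, l₂, l₃, l₄, l₅, -⟩ := F.lt_chain T
  obtain ⟨x, hx, hpx, hfirst⟩ := F.exists_next
  obtain ⟨t, ht, hlt, htr, hne, -⟩ := h.cup₅ b₂ T.mem₂ b₃ T.mem₃ p₁ T.right_mem p₂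
    F.gap₁.right_mem x hx l₃ l₄ l₅ hpx h₂₃ (T.cup_corner h F.gap₁.right_mem l₅).2.2
    (F.gap₂.cup_left h T.right_mem l₅ hx hpx ((hfirst d hd hpd).trans_lt hdp))
    ⟨b₂, by simp, T.right₂⟩ ⟨p₁, by simp, T.not_right_right⟩
  grind [F.mem_cases T ht]

lemma false_of_left_right_of_eq (F : G.Frame V p₀ p₁ p₂ p₃) (T : G.Triple V p₀ b₁ b₂ b₃ p₁)
    (h : G.NoDividedHole V) (h₁₂ : G.cup p₀ b₁ b₂) (h₂₃ : G.cup b₂ b₃ p₁) {c : α} (hc : c ∈ V)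
    (hpc : p₁ < c) (hcp : c < p₂) (hmid : ∀ t ∈ V, p₁ < t → t < p₂ → t = c) : False := by
  have ⟨l₁, l₂, l₃, l₄, l₅, l₆⟩ := F.lt_chain T
  obtain ⟨x, hx, hpx, hfirst⟩ := F.exists_next
  have hp₂ := F.gap₁.right_mem
  have hp₂l := F.gap₁.not_right_right
  have h₁₂₃ : ¬G.cup b₁ b₂ b₃ := fun h' => T.toGap.not_cup_of_cup T.mem₁ l₁ l₂ (by order) h₁₂
    ((G.sig b₁ b₂ b₃ p₁ l₂ l₃ l₄).2.1 h' h₂₃).1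
  have h₂cp : G.cup b₂ c p₂ := by
    by_contra h₂cp
    obtain ⟨t, ht, hlt, htr, hne, -⟩ := h.cup₄ b₂ T.mem₂ b₃ T.mem₃ p₁ T.right_mem p₂ hp₂ c hc
      l₃ l₄ l₅ (by order) hcp h₂₃ (T.cup_corner h hp₂ l₅).2.2 h₂cp ⟨b₂, by simp, T.right₂⟩
      ⟨p₂, by simp, hp₂l⟩
    grind [F.mem_cases T ht]
  have h₃cp : ¬G.cup b₃ c p₂ := fun h₃cp => by
    obtain ⟨t, ht, hlt, htr, hne, hin⟩ := h.cup₅ b₂ T.mem₂ b₃ T.mem₃ c hc p₂ hp₂ x hx l₃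
      (by order) hcp hpx
      ((G.sig b₂ b₃ p₁ c l₃ l₄ hpc).2.1 h₂₃ (T.cup_corner h hc hpc).2.2).1 h₃cp
      (F.gap₁.cup_right h hx hpx hc hpc hcp) ⟨b₂, by simp, T.right₂⟩ ⟨p₂, by simp, hp₂l⟩
    have := (T.cup_corner h hc hpc).2.2
    grind [F.mem_cases T ht, Above]
  have h₁₃c : G.cup b₁ b₃ c := by
    by_contra h₁₃c
    obtain ⟨t, ht, hlt, htr, hne, hin⟩ := h.cap₄ b₁ T.mem₁ b₃ T.mem₃ c hc p₂ hp₂ p₁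
      T.right_mem (by order) (by order) hcp (by order) l₅ h₁₃c h₃cp (T.cup_corner h hp₂ l₅).1
      ⟨b₁, by simp, T.right₁⟩ ⟨p₂, by simp, hp₂l⟩
    grind [F.mem_cases T ht, Below]
  have hp₀₂c : ¬G.cup p₀ b₂ c := fun h' => G.not_cup_of_right_mid (by order) (by order)
    T.not_right_left T.right₂ hp₂l ((G.sig p₀ b₂ c p₂ (by order) (by order) hcp).2.1 h' h₂cp).1
  obtain ⟨t, ht, hlt, htr, hne, hin⟩ := h.cup₄ p₀ T.left_mem b₁ T.mem₁ b₃ T.mem₃ c hc b₂ T.mem₂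
    l₁ (by order) (by order) (by order) (by order)
    (T.cup_of_cup_left_right h hp₂ l₅ hp₂l h₁₂ h₂₃) h₁₃c hp₀₂c ⟨b₂, by simp, T.right₂⟩
    ⟨p₀, by simp, T.not_right_left⟩
  have := (T.cup_corner h hc hpc).2.2
  grind [F.mem_cases T ht, Above]

lemma false_of_left_right_of_eq_or_eq (F : G.Frame V p₀ p₁ p₂ p₃)
    (T : G.Triple V p₀ b₁ b₂ b₃ p₁) (h : G.NoDividedHole V) (h₂₃ : G.cup b₂ b₃ p₁) {c₁ c₂ : α}
    (hc₁ : c₁ ∈ V) (hc₂ : c₂ ∈ V) (hpc : p₁ < c₁) (hcc : c₁ < c₂) (hcp : c₂ < p₂)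
    (hmid : ∀ t ∈ V, p₁ < t → t < p₂ → t = c₁ ∨ t = c₂) : False := by
  obtain ⟨l₁, l₂, l₃, l₄, -, l₆⟩ := F.lt_chain T
  obtain ⟨x, hx, hpx, hfirst⟩ := F.exists_next
  have hpcc : ¬G.cup p₁ c₁ c₂ := fun hpcc => by
    obtain ⟨t, ht, hlt, htr, hne, -⟩ := h.cup₅ b₂ T.mem₂ b₃ T.mem₃ p₁ T.right_mem c₁ hc₁ c₂ hc₂
      l₃ l₄ hpc hcc h₂₃ (T.cup_corner h hc₁ hpc).2.2 hpcc ⟨b₂, by simp, T.right₂⟩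
      ⟨p₁, by simp, T.not_right_right⟩
    grind [F.mem_cases T ht]
  have hccp : G.cup c₁ c₂ p₂ := (h.cup_or_cup_of_visible T.right_mem hc₁ hc₂ F.gap₁.right_mem hpc
    hcc hcp (by grind [Above]) (.inl (F.gap₁.right_of_mem c₁ hc₁ hpc (by order)))).resolve_left hpcc
  have h₂cc : ¬G.cup b₂ c₁ c₂ := fun h₂cc => by
    obtain ⟨t, ht, hlt, htr, hne, hin⟩ := h.cup₅ b₂ T.mem₂ c₁ hc₁ c₂ hc₂ p₂ F.gap₁.right_mem x hx
      (by order) hcc hcp hpx h₂cc hccp (F.gap₁.cup_right h hx hpx hc₂ (by order) hcp)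
      ⟨b₂, by simp, T.right₂⟩ ⟨p₂, by simp, F.gap₁.not_right_right⟩
    have ⟨_, h₂pc, h₃pc⟩ := T.cup_corner h hc₁ hpc
    have := (G.sig b₂ b₃ p₁ c₁ l₃ l₄ hpc).2.1 h₂₃ h₃pc
    grind [F.mem_cases T ht, Above]
  obtain ⟨t, ht, hlt, htr, hne, -⟩ := h.cup₄ b₂ T.mem₂ b₃ T.mem₃ p₁ T.right_mem c₂ hc₂ c₁ hc₁
    l₃ l₄ (by order) (by order) hcc h₂₃ (T.cup_corner h hc₂ (by order)).2.2 h₂cc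
    ⟨b₂, by simp, T.right₂⟩ ⟨p₁, by simp, T.not_right_right⟩
  grind [F.mem_cases T ht]

lemma exists_lowest_middle (F : G.Frame V p₀ p₁ p₂ p₃) (T : G.Triple V p₀ b₁ b₂ b₃ p₁)
    (h : G.NoDividedHole V) (hcap : ∃ c ∈ V, p₁ < c ∧ c < p₂ ∧ ¬G.cup b₂ b₃ c) :
    ∃ c ∈ V, p₁ < c ∧ c < p₂ ∧ G.cup b₃ c p₂ ∧
      (∀ t ∈ V, p₁ < t → t < c → ¬G.cup b₃ t c) ∧ ∀ t ∈ V, c < t → t < p₂ → G.cup b₃ c t := by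
  obtain ⟨-, -, l₃, l₄, -⟩ := F.lt_chain T
  obtain ⟨c₀, hc₀, hpc₀, hcp₀, hcap⟩ := hcap
  obtain ⟨c, ⟨hc, hpc, hcp⟩, hlow, hlow'⟩ := exists_lowest_from (G := G) (b := b₃)
    (P := fun t => t ∈ V ∧ p₁ < t ∧ t < p₂) ⟨c₀, hc₀, hpc₀, hcp₀⟩ fun t ht => l₄.trans ht.2.1
  have h₂₃c : ¬G.cup b₂ b₃ c := by
    rcases lt_trichotomy c c₀ with hlt | rfl | hlt
    · exact fun h' => hcap ((G.sig b₂ b₃ c c₀ l₃ (by order) hlt).2.1 h'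
        (hlow' c₀ ⟨hc₀, hpc₀, hcp₀⟩ hlt)).1
    · exact hcap
    · exact ((G.sig b₂ b₃ c₀ c l₃ (by order) hlt).2.2.2.2.1 hcap
        (hlow c₀ ⟨hc₀, hpc₀, hcp₀⟩ hlt)).1
  have hlow : ∀ t ∈ V, p₁ < t → t < c → ¬G.cup b₃ t c := fun t ht hpt htc =>
    hlow t ⟨ht, hpt, htc.trans hcp⟩ htc
  have hlow' : ∀ t ∈ V, c < t → t < p₂ → G.cup b₃ c t := fun t ht hct htp =>
    hlow' t ⟨ht, hpc.trans hct, htp⟩ hct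
  exact ⟨c, hc, hpc, hcp, F.cup_of_lowest T h hc hpc hcp hlow' hlow h₂₃c, hlow, hlow'⟩

lemma false_of_right_left_of_eq (F : G.Frame V p₀ p₁ p₂ p₃) (T : G.Triple V p₀ b₁ b₂ b₃ p₁)
    (h : G.NoDividedHole V) (h₁₂ : G.cup b₁ b₂ p₁) (h₂₃ : G.cup p₀ b₂ b₃) {c : α} (hc : c ∈ V)
    (hpc : p₁ < c) (hcp : c < p₂) (hmid : ∀ t ∈ V, p₁ < t → t < p₂ → t = c)
    (h₃cp : G.cup b₃ c p₂) : False := by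
  obtain ⟨l₁, l₂, l₃, l₄, -, l₆⟩ := F.lt_chain T
  obtain ⟨x, hx, hpx, hfirst⟩ := F.exists_next
  obtain ⟨t, ht, hlt, htr, hne, hin⟩ := h.cup₅ b₁ T.mem₁ b₃ T.mem₃ c hc p₂ F.gap₁.right_mem x hx
    (by order) (by order) hcp hpx (T.cup_of_cup_right_left h hc hpc h₁₂) h₃cp
    (F.gap₁.cup_right h hx hpx hc hpc hcp) ⟨b₁, by simp, T.right₁⟩
    ⟨p₂, by simp, F.gap₁.not_right_right⟩
  have h₁₂₃ := T.cup_of_cup_left h h₂₃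
  have h₃pc := (T.cup_corner h hc hpc).2.2
  grind [F.mem_cases T ht, Above]

lemma not_cup_of_right_left (F : G.Frame V p₀ p₁ p₂ p₃) (T : G.Triple V p₀ b₁ b₂ b₃ p₁)
    (h : G.NoDividedHole V) (h₁₂ : G.cup b₁ b₂ p₁) (h₂₃ : G.cup p₀ b₂ b₃) {c c' : α} (hc : c ∈ V)
    (hc' : c' ∈ V) (hpc : p₁ < c) (hcp : c < p₂) (hpc' : p₁ < c') (hcp' : c' < p₂)
    (hmid : ∀ t ∈ V, p₁ < t → t < p₂ → t = c ∨ t = c') (h₃cp : G.cup b₃ c p₂)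
    (h₃cc' : c < c' → G.cup b₃ c c') : ¬G.cup b₂ b₃ c' := by
  intro h₂₃c'
  obtain ⟨l₁, l₂, l₃, l₄, -, l₆⟩ := F.lt_chain T
  have hp₂ := F.gap₁.right_mem
  have hp₂l := F.gap₁.not_right_right
  have h₁₂₃ := T.cup_of_cup_left h h₂₃
  have h₃pc := (T.cup_corner h hc hpc).2.2
  have h₃pc' := (T.cup_corner h hc' hpc').2.2
  have h₁c'p : G.cup b₁ c' p₂ := by
    by_contra h₁c'p
    obtain ⟨t, ht, hlt, htr, hne, hin⟩ := h.cup₄ b₁ T.mem₁ b₃ T.mem₃ c hc p₂ hp₂ c' hc'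
      (by order) (by order) hcp (by order) hcp' (T.cup_of_cup_right_left h hc hpc h₁₂) h₃cp
      h₁c'p ⟨b₁, by simp, T.right₁⟩ ⟨p₂, by simp, hp₂l⟩
    grind [F.mem_cases T ht, Above]
  have hp₀₁c' : ¬G.cup p₀ b₁ c' := fun h' => G.not_cup_of_right_mid (by order) (by order)
    T.not_right_left T.right₁ hp₂l
    ((G.sig p₀ b₁ c' p₂ (by order) (by order) hcp').2.1 h' h₁c'p).1
  obtain ⟨t, ht, hlt, htr, hne, hin⟩ := h.cup₄ p₀ T.left_mem b₂ T.mem₂ b₃ T.mem₃ c' hc' b₁ T.mem₁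
    (by order) l₃ (by order) l₁ (by order) h₂₃ h₂₃c' hp₀₁c' ⟨b₂, by simp, T.right₂⟩
    ⟨p₀, by simp, T.not_right_left⟩
  grind [F.mem_cases T ht, Above]

lemma false_of_right_left_of_eq_or_eq (F : G.Frame V p₀ p₁ p₂ p₃)
    (T : G.Triple V p₀ b₁ b₂ b₃ p₁) (h : G.NoDividedHole V) (h₁₂ : G.cup b₁ b₂ p₁)
    (h₂₃ : G.cup p₀ b₂ b₃) {c₁ c₂ : α} (hc₁ : c₁ ∈ V) (hc₂ : c₂ ∈ V) (hpc : p₁ < c₁)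
    (hcc : c₁ < c₂) (hcp : c₂ < p₂) (hmid : ∀ t ∈ V, p₁ < t → t < p₂ → t = c₁ ∨ t = c₂)
    (hcap : ∃ c ∈ V, p₁ < c ∧ c < p₂ ∧ ¬G.cup b₂ b₃ c) : False := by
  obtain ⟨l₁, l₂, l₃, l₄, -, l₆⟩ := F.lt_chain T
  obtain ⟨x, hx, hpx, hfirst⟩ := F.exists_next
  obtain ⟨c, hc, hpc', hcp', h₃cp, hlow, hlow'⟩ := F.exists_lowest_middle T h hcap
  rcases hmid c hc hpc' hcp' with rfl | rfl
  · have h₃cc : G.cup b₃ c c₂ := hlow' c₂ hc₂ hcc hcp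
    have h₂₃c := F.not_cup_of_right_left T h h₁₂ h₂₃ hc hc₂ hpc hcp' (by order) hcp hmid h₃cp
      fun _ => h₃cc
    have ⟨_, h₂pc, h₃pc⟩ := T.cup_corner h hc hpc
    rcases h.cup_or_cup_of_visible T.right_mem hc hc₂ F.gap₁.right_mem hpc hcc hcp
      (by grind [Above]) (.inl (F.gap₁.right_of_mem c hc hpc hcp')) with hpcc | hccp
    · obtain ⟨t, ht, hlt, htr, hne, -⟩ := h.cup₄ b₂ T.mem₂ p₁ T.right_mem c hc c₂ hc₂ b₃ T.mem₃
        (by order) hpc hcc l₃ (by order) h₂pc hpcc h₂₃c ⟨b₂, by simp, T.right₂⟩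
        ⟨p₁, by simp, T.not_right_right⟩
      grind [F.mem_cases T ht]
    · obtain ⟨t, ht, hlt, htr, hne, hin⟩ := h.cup₅ b₃ T.mem₃ c hc c₂ hc₂ p₂ F.gap₁.right_mem x hx
        (by order) hcc hcp hpx h₃cc hccp (F.gap₁.cup_right h hx hpx hc₂ (by order) hcp)
        ⟨b₃, by simp, T.right₃⟩ ⟨p₂, by simp, F.gap₁.not_right_right⟩
      grind [F.mem_cases T ht, Above]
  · have h₂₃c := F.not_cup_of_right_left T h h₁₂ h₂₃ hc hc₁ hpc' hcp' hpc (by order)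
      (fun t ht hpt htp => (hmid t ht hpt htp).symm) h₃cp fun h' => absurd h' hcc.not_gt
    obtain ⟨t, ht, hlt, htr, hne, -⟩ := h.cap₄ b₂ T.mem₂ b₃ T.mem₃ c₁ hc₁ c hc p₁ T.right_mem
      l₃ (by order) hcc (by order) hpc' h₂₃c (hlow c₁ hc₁ hpc hcc)
      (T.cup_corner h hc hpc').2.1 ⟨b₂, by simp, T.right₂⟩ ⟨p₁, by simp, T.not_right_right⟩
    grind [F.mem_cases T ht]

lemma cup_left_of_forall_cup (F : G.Frame V p₀ p₁ p₂ p₃) (T : G.Triple V p₀ b₁ b₂ b₃ p₁)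
    (h : G.NoDividedHole V) (h₂₃ : G.cup p₀ b₂ b₃)
    (h₂₃r : ∀ r ∈ V, p₁ < r → G.right r → G.cup b₂ b₃ r) {r : α} (hr : r ∈ V) (hpr : p₁ < r)
    (hrr : G.right r) : G.cup p₀ b₁ r := by
  have ⟨l₁, l₂, l₃, l₄, l₅, l₆⟩ := F.lt_chain T
  by_contra h₀₁r
  obtain ⟨r, ⟨hr, hpr, hrr, h₀₁r⟩, hfirst⟩ := exists_first
    (P := fun r => r ∈ V ∧ p₁ < r ∧ G.right r ∧ ¬G.cup p₀ b₁ r) ⟨r, hr, hpr, hrr, h₀₁r⟩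
  obtain ⟨t, ht, hlt, htr, hne, -, -, h₃tr, -, h₁tr⟩ := h.cup₄ p₀ T.left_mem b₂ T.mem₂ b₃ T.mem₃ r
    hr b₁ T.mem₁ (by order) l₃ (by order) l₁ (by order) h₂₃ (h₂₃r r hr hpr hrr) h₀₁r
    ⟨b₂, by simp, T.right₂⟩ ⟨p₀, by simp, T.not_right_left⟩
  have hpt : p₁ < t := by
    have := (T.cup_corner h hr hpr).2.2
    grind [F.mem_cases T ht, Above]
  by_cases htright : G.right t
  · have hp₀₁t : G.cup p₀ b₁ t := by
      have := hfirst t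
      grind
    exact h₀₁r ((G.sig p₀ b₁ t r l₁ (by order) htr).2.1 hp₀₁t (h₁tr (by order) htr)).1
  · have hrp : r < p₃ := (F.mem_Icc r hr).2.lt_of_ne
      (by rintro rfl; exact F.gap₂.not_right_right hrr)
    have htp : t = p₂ := by
      have := F.gap₁.right_of_mem t ht
      have := F.gap₂.right_of_mem t ht
      grind [F.mem_cases T ht]
    subst htp
    exact h₃tr (by order) htr ((G.sig b₃ p₁ t r l₄ l₅ htr).2.1
      (T.cup_corner h ht l₅).2.2 (F.gap₂.cup_left h T.right_mem l₅ hr htr hrp)).2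

lemma cup_of_forall_cup_right (F : G.Frame V p₀ p₁ p₂ p₃) (T : G.Triple V p₀ b₁ b₂ b₃ p₁)
    (h : G.NoDividedHole V) (h₂₃ : G.cup p₀ b₂ b₃)
    (h₂₃r : ∀ r ∈ V, p₁ < r → G.right r → G.cup b₂ b₃ r) : G.cup b₃ p₂ p₃ := by
  have ⟨l₁, l₂, l₃, l₄, l₅, l₆⟩ := F.lt_chain T
  have hp₂ := F.gap₁.right_mem
  have hp₃ := F.gap₂.right_mem
  have h₂₃p : ¬G.cup b₂ b₃ p₂ := fun h' => G.not_cup_of_right_mid (by order) (by order)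
    T.not_right_left T.right₂ F.gap₁.not_right_right
    ((G.sig p₀ b₂ b₃ p₂ (by order) l₃ (by order)).2.1 h₂₃ h').1
  by_contra h₃pp
  obtain ⟨t, ht, hlt, htr, hne, -, h₃tp, hptp, -⟩ := h.cap₄ b₂ T.mem₂ b₃ T.mem₃ p₂ hp₂ p₃ hp₃ p₁
    T.right_mem l₃ (by order) l₆ (by order) (by order) h₂₃p h₃pp
    (T.cup_corner h hp₃ (by order)).2.1 ⟨b₂, by simp, T.right₂⟩
    ⟨p₂, by simp, F.gap₁.not_right_right⟩
  rcases lt_or_ge t p₂ with htp | hpt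
  · have hpt : p₁ < t := by grind [F.mem_cases T ht]
    exact h₂₃p ((G.sig b₂ b₃ t p₂ l₃ (by order) htp).2.1
      (h₂₃r t ht hpt (F.gap₁.right_of_mem t ht hpt htp)) (h₃tp (by order) htp)).1
  · have hpt : p₂ < t := by grind
    exact G.not_cup_of_right_mid hpt htr F.gap₂.not_right_left
      (F.gap₂.right_of_mem t ht hpt htr) F.gap₂.not_right_right (hptp hpt htr)

lemma false_of_right_left_of_forall_cup (F : G.Frame V p₀ p₁ p₂ p₃)
    (T : G.Triple V p₀ b₁ b₂ b₃ p₁) (h : G.NoDividedHole V) (h₁₂ : G.cup b₁ b₂ p₁)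
    (h₂₃ : G.cup p₀ b₂ b₃) (h₂₃r : ∀ r ∈ V, p₁ < r → G.right r → G.cup b₂ b₃ r)
    (hright : ∃ r ∈ V, p₁ < r ∧ G.right r) : False := by
  have ⟨l₁, l₂, l₃, l₄, l₅, l₆⟩ := F.lt_chain T
  have hp₂ := F.gap₁.right_mem
  have hp₃ := F.gap₂.right_mem
  obtain ⟨y, ⟨hy, hpy, hyr⟩, hlow, hlow'⟩ := exists_lowest_from (G := G) (b := b₁)
    (P := fun t => t ∈ V ∧ p₁ < t ∧ G.right t) hright fun t ht => by order
  have hyp : y < p₃ := (F.mem_Icc y hy).2.lt_of_ne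
    (by rintro rfl; exact F.gap₂.not_right_right hyr)
  have h₁yp : ¬G.cup b₁ y p₃ := fun h' => G.not_cup_of_right_mid (by order) (by order)
    T.not_right_left T.right₁ F.gap₂.not_right_right
    ((G.sig p₀ b₁ y p₃ l₁ (by order) hyp).2.1
      (F.cup_left_of_forall_cup T h h₂₃ h₂₃r hy hpy hyr) h').1
  obtain ⟨t, ht, hlt, htr, hne, h₁t₃, h₃tp, -, h₁ty, hytp⟩ := h.cup₄ b₁ T.mem₁ b₃ T.mem₃ p₂ hp₂
    p₃ hp₃ y hy (by order) (by order) l₆ (by order) hyp (T.cup_of_cup_right_left h hp₂ l₅ h₁₂)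
    (F.cup_of_forall_cup_right T h h₂₃ h₂₃r) h₁yp ⟨b₁, by simp, T.right₁⟩
    ⟨p₂, by simp, F.gap₁.not_right_right⟩
  have hpt : p₁ < t := by
    have := T.cup_of_cup_left h h₂₃
    have := (T.cup_corner h hp₂ l₅).2.2
    grind [F.mem_cases T ht, Above]
  have htright : G.right t := by
    have := F.gap₁.right_of_mem t ht
    have := F.gap₂.right_of_mem t ht
    grind [F.mem_cases T ht]
  rcases lt_trichotomy t y with hty | rfl | hyt
  · exact hlow t ⟨ht, hpt, htright⟩ hty (h₁ty hlt hty)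
  · simp at hne
  · exact h₁yp ((G.sig b₁ y t p₃ (by order) hyt htr).2.1 (hlow' t ⟨ht, hpt, htright⟩ hyt)
      (hytp hyt htr)).1

lemma middle_cases (F : G.Frame V p₀ p₁ p₂ p₃) (h : G.NoDividedHole V) :
    (∀ t ∈ V, p₁ < t → t < p₂ → False) ∨
    (∃ c ∈ V, p₁ < c ∧ c < p₂ ∧ ∀ t ∈ V, p₁ < t → t < p₂ → t = c) ∨
    ∃ c₁ ∈ V, ∃ c₂ ∈ V, p₁ < c₁ ∧ c₁ < c₂ ∧ c₂ < p₂ ∧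
      ∀ t ∈ V, p₁ < t → t < p₂ → t = c₁ ∨ t = c₂ := by
  have hcard := F.ncard_middle_le_two h
  rcases Set.eq_empty_or_nonempty (V ∩ Set.Ioo p₁ p₂) with hs | hs
  · exact .inl fun t ht hpt htp => (hs.subset ⟨ht, hpt, htp⟩).elim
  rcases hs.exists_eq_singleton_or_nontrivial with ⟨c, hs⟩ | ⟨a, ha, b, hb, hab⟩
  · have hc : c ∈ V ∩ Set.Ioo p₁ p₂ := hs ▸ rfl
    exact .inr (.inl ⟨c, hc.1, hc.2.1, hc.2.2, fun t ht hpt htp => hs.subset ⟨ht, hpt, htp⟩⟩)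
  · have hs : V ∩ Set.Ioo p₁ p₂ = {a, b} := (Set.eq_of_subset_of_ncard_le
      (Set.pair_subset ha hb) (hcard.trans (Set.ncard_pair hab).ge)).symm
    have hmid : ∀ t ∈ V, p₁ < t → t < p₂ → t = a ∨ t = b := fun t ht hpt htp =>
      hs.subset ⟨ht, hpt, htp⟩
    rcases hab.lt_or_gt with hlt | hlt
    · exact .inr (.inr ⟨a, ha.1, b, hb.1, ha.2.1, hlt, hb.2.2, hmid⟩)
    · exact .inr (.inr ⟨b, hb.1, a, ha.1, hb.2.1, hlt, ha.2.2, fun t ht hpt htp =>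
        (hmid t ht hpt htp).symm⟩)

lemma false_of_right_left (F : G.Frame V p₀ p₁ p₂ p₃) (T : G.Triple V p₀ b₁ b₂ b₃ p₁)
    (h : G.NoDividedHole V) (h₁₂ : G.cup b₁ b₂ p₁) (h₂₃ : G.cup p₀ b₂ b₃)
    (hright : ∃ r ∈ V, p₁ < r ∧ G.right r) : False := by
  by_cases hcap : ∃ c ∈ V, p₁ < c ∧ c < p₂ ∧ ¬G.cup b₂ b₃ c
  · rcases F.middle_cases h with hmid | ⟨c, hc, hpc, hcp, hmid⟩ |
      ⟨c₁, hc₁, c₂, hc₂, hpc, hcc, hcp, hmid⟩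
    · obtain ⟨c, hc, hpc, hcp, -⟩ := hcap
      exact hmid c hc hpc hcp
    · obtain ⟨c', hc', hpc', hcp', h₃cp, -⟩ := F.exists_lowest_middle T h hcap
      obtain rfl := hmid c' hc' hpc' hcp'
      exact F.false_of_right_left_of_eq T h h₁₂ h₂₃ hc' hpc' hcp' hmid h₃cp
    · exact F.false_of_right_left_of_eq_or_eq T h h₁₂ h₂₃ hc₁ hc₂ hpc hcc hcp hmid hcap
  · push Not at hcap
    refine F.false_of_right_left_of_forall_cup T h h₁₂ h₂₃ (fun r hr hpr hrr => ?_) hright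
    rcases F.lt_or_mem_Ioo_of_right hr hrr with hrp | ⟨hpr', hrp⟩
    · exact hcap r hr hpr hrp
    · exact F.cup_of_forall_cup T h hcap hr hpr' hrp

lemma false_of_triple (F : G.Frame V p₀ p₁ p₂ p₃) (T : G.Triple V p₀ b₁ b₂ b₃ p₁)
    (h : G.NoDividedHole V) (hright : ∃ r ∈ V, p₁ < r ∧ G.right r) : False := by
  rcases T.cup_left_or_cup_right₂₃ h with h₂₃ | h₂₃ <;>
    rcases T.cup_left_or_cup_right₁₂ h with h₁₂ | h₁₂
  · rcases F.middle_cases h with hmid | ⟨c, hc, hpc, hcp, hmid⟩ |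
      ⟨c₁, hc₁, c₂, hc₂, hpc, hcc, hcp, hmid⟩
    · obtain ⟨d, hd, hpd, hdr⟩ := hright
      obtain ⟨hpd', hdp⟩ := (F.lt_or_mem_Ioo_of_right hd hdr).resolve_left (hmid d hd hpd)
      exact T.not_cup_of_cup_left_left h h₁₂ h₂₃ hd hpd
        (F.cup_of_forall_cup T h (fun c hc hpc hcp => (hmid c hc hpc hcp).elim) hd hpd' hdp)
    · exact F.false_of_left_left_of_eq T h h₁₂ h₂₃ hc hpc hcp hmid
    · exact F.false_of_left_left_of_eq_or_eq T h h₁₂ h₂₃ hc₁ hc₂ hpc hcc hcp hmid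
  · exact F.false_of_right_left T h h₁₂ h₂₃ hright
  · rcases F.middle_cases h with hmid | ⟨c, hc, hpc, hcp, hmid⟩ |
      ⟨c₁, hc₁, c₂, hc₂, hpc, hcc, hcp, hmid⟩
    · obtain ⟨d, hd, hpd, hdr⟩ := hright
      obtain ⟨hpd', hdp⟩ := (F.lt_or_mem_Ioo_of_right hd hdr).resolve_left (hmid d hd hpd)
      exact F.false_of_left_right_of_forall T h h₂₃ hd hpd' hdp hmid
    · exact F.false_of_left_right_of_eq T h h₁₂ h₂₃ hc hpc hcp hmid
    · exact F.false_of_left_right_of_eq_or_eq T h h₂₃ hc₁ hc₂ hpc hcc hcp hmid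
  · exact T.not_cup_right_right h F.gap₁.right_mem F.gap₁.lt h₁₂ h₂₃

end Frame

variable (G V) in
/-- All points of `B` lie in the first of three consecutive gaps; they are `b₁ < b₂ < b₃` together
with `e`, above which no segment between points of `V` passes. -/
structure Concentrated (p₀ b₁ b₂ b₃ p₁ p₂ p₃ e : α) : Prop
    extends G.Frame V p₀ p₁ p₂ p₃ where
  triple : G.Triple (V \ {e}) p₀ b₁ b₂ b₃ p₁
  mem : e ∈ V
  left_lt : p₀ < e
  not_cup : ∀ u ∈ V, ∀ v ∈ V, u < e → e < v → ¬G.cup u e v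
  lt_of_right : ∀ t ∈ V, G.right t → t < p₁
  right : G.right e

namespace Concentrated

variable {p₀ b₁ b₂ b₃ p₁ p₂ p₃ e : α}

lemma lt_chain (C : G.Concentrated V p₀ b₁ b₂ b₃ p₁ p₂ p₃ e) :
    p₀ < b₁ ∧ b₁ < b₂ ∧ b₂ < b₃ ∧ b₃ < p₁ ∧ p₁ < p₂ ∧ p₂ < p₃ ∧ p₀ < e ∧ e < p₁ :=
  ⟨C.triple.lt₁, C.triple.lt₂, C.triple.lt₃, C.triple.lt₄, C.gap₁.lt, C.gap₂.lt, C.left_lt,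
    C.lt_of_right e C.mem C.right⟩

lemma mem_cases (C : G.Concentrated V p₀ b₁ b₂ b₃ p₁ p₂ p₃ e) {t : α} (ht : t ∈ V) :
    t = p₀ ∨ t = b₁ ∨ t = b₂ ∨ t = b₃ ∨ t = e ∨ t = p₁ ∨ t = p₂ ∨ t = p₃ := by
  by_cases hte : t = e
  · simp [hte]
  have hright : G.right t → ¬p₁ < t := fun htr => (C.lt_of_right t ht htr).not_gt
  have := (C.sdiff_singleton C.right).mem_cases C.triple ⟨ht, hte⟩
  grind [C.gap₁.right_of_mem t ht, C.gap₂.right_of_mem t ht, C.gap₁.lt]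

lemma false_of_left_left (C : G.Concentrated V p₀ b₁ b₂ b₃ p₁ p₂ p₃ e)
    (h : G.NoDividedHole V) (h₁₂ : G.cup p₀ b₁ b₂) (h₁₂₃ : G.cup b₁ b₂ b₃) :
    False := by
  have T := C.triple
  have ⟨l₁, l₂, l₃, l₄, l₅, l₆, hpe, hep⟩ := C.lt_chain
  rcases lt_or_gt_of_ne (show b₃ ≠ e from T.mem₃.2) with hbe | heb
  · by_cases h₂₃e : G.cup b₂ b₃ e
    · obtain ⟨t, ht, hlt, htr, hne, -⟩ := h.cup₅ p₀ T.left_mem.1 b₁ T.mem₁.1 b₂ T.mem₂.1 b₃ T.mem₃.1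
        e C.mem l₁ l₂ l₃ hbe h₁₂ h₁₂₃ h₂₃e ⟨b₁, by simp, T.right₁⟩ ⟨p₀, by simp, T.not_right_left⟩
      grind [C.mem_cases ht]
    · obtain ⟨t, ht, hin⟩ := h.fan b₂ T.mem₂.1 b₃ T.mem₃.1 e C.mem p₁ T.right_mem.1 l₃ hbe hep h₂₃e
        (C.not_cup b₃ T.mem₃.1 p₁ T.right_mem.1 hbe hep) ⟨b₂, by simp, T.right₂⟩
      grind [C.mem_cases ht, Above]
  · obtain ⟨t, ht, hlt, htr, hne, -⟩ := h.cup₄ p₀ T.left_mem.1 b₁ T.mem₁.1 b₂ T.mem₂.1 b₃ T.mem₃.1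
      e C.mem l₁ l₂ l₃ hpe heb h₁₂ h₁₂₃ (C.not_cup p₀ T.left_mem.1 b₃ T.mem₃.1 hpe heb)
      ⟨b₁, by simp, T.right₁⟩ ⟨p₀, by simp, T.not_right_left⟩
    grind [C.mem_cases ht]

variable [Finite α]

lemma false_of_left_right (C : G.Concentrated V p₀ b₁ b₂ b₃ p₁ p₂ p₃ e)
    (h : G.NoDividedHole V) (h₁₂ : G.cup p₀ b₁ b₂) (h₂₃ : G.cup b₂ b₃ p₁)
    (h₁₃ : G.cup p₀ b₁ b₃) : False := by
  have T := C.triple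
  have ⟨l₁, l₂, l₃, l₄, l₅, l₆, hpe, hep⟩ := C.lt_chain
  have hp₂ := C.gap₁.right_mem
  have h₃pp : G.cup b₃ p₁ p₂ := C.gap₀.cup_right h hp₂ l₅ T.mem₃.1 (by order) l₄
  rcases lt_or_gt_of_ne (show b₂ ≠ e from T.mem₂.2) with hbe | heb
  · obtain ⟨t, ht, hlt, htr, hne, -⟩ := h.cup₄ b₂ T.mem₂.1 b₃ T.mem₃.1 p₁ T.right_mem.1 p₂ hp₂
      e C.mem l₃ l₄ l₅ hbe (by order) h₂₃ h₃pp (C.not_cup b₂ T.mem₂.1 p₂ hp₂ hbe (by order))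
      ⟨b₂, by simp, T.right₂⟩ ⟨p₁, by simp, T.not_right_right⟩
    grind [C.mem_cases ht]
  by_cases he₂₃ : G.cup e b₂ b₃
  · obtain ⟨t, ht, hlt, htr, hne, hin⟩ := h.cup₅ e C.mem b₂ T.mem₂.1 b₃ T.mem₃.1 p₁ T.right_mem.1
      p₂ hp₂ heb l₃ l₄ l₅ he₂₃ h₂₃ h₃pp ⟨b₂, by simp, T.right₂⟩ ⟨p₁, by simp, T.not_right_right⟩
    have hb₁ : t = b₁ := by grind [C.mem_cases ht]
    subst hb₁
    exact hin.1 hlt l₂ (by_contra fun h' => (G.sig p₀ e t b₂ hpe hlt l₂).2.2.2.2.1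
      (C.not_cup p₀ T.left_mem.1 t ht hpe hlt) h' |>.2 h₁₂)
  rcases lt_or_gt_of_ne (show b₁ ≠ e from T.mem₁.2) with hbe | -
  · obtain ⟨t, ht, hin⟩ := h.fan b₁ T.mem₁.1 e C.mem b₂ T.mem₂.1 b₃ T.mem₃.1 hbe heb l₃
      (C.not_cup b₁ T.mem₁.1 b₂ T.mem₂.1 hbe heb) he₂₃ ⟨b₂, by simp, T.right₂⟩
    grind [C.mem_cases ht, Above]
  · obtain ⟨t, ht, hlt, htr, hne, -⟩ := h.cap₄ p₀ T.left_mem.1 e C.mem b₂ T.mem₂.1 b₃ T.mem₃.1 b₁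
      T.mem₁.1 hpe heb l₃ l₁ (by order) (C.not_cup p₀ T.left_mem.1 b₂ T.mem₂.1 hpe heb) he₂₃ h₁₃
      ⟨b₁, by simp, T.right₁⟩ ⟨p₀, by simp, T.not_right_left⟩
    grind [C.mem_cases ht]

lemma false_of_right_left (C : G.Concentrated V p₀ b₁ b₂ b₃ p₁ p₂ p₃ e)
    (h : G.NoDividedHole V) (h₁₂₃ : G.cup b₁ b₂ b₃) (h₁₃p : G.cup b₁ b₃ p₂)
    (h₃pp : G.cup b₃ p₂ p₃) : False := by
  have T := C.triple
  have ⟨l₁, l₂, l₃, l₄, l₅, l₆, hpe, hep⟩ := C.lt_chain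
  have hp₂ := C.gap₁.right_mem
  have hp₃ := C.gap₂.right_mem
  have h₃p₁ : G.cup b₃ p₁ p₂ := C.gap₀.cup_right h hp₂ l₅ T.mem₃.1 (by order) l₄
  rcases lt_or_gt_of_ne (show b₁ ≠ e from T.mem₁.2) with hbe | heb
  · obtain ⟨t, ht, hlt, htr, hne, hin⟩ := h.cup₄ b₁ T.mem₁.1 b₃ T.mem₃.1 p₂ hp₂ p₃ hp₃ e C.mem
      (by order) (by order) l₆ hbe (by order) h₁₃p h₃pp
      (C.not_cup b₁ T.mem₁.1 p₃ hp₃ hbe (by order))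
      ⟨b₁, by simp, T.right₁⟩ ⟨p₂, by simp, C.gap₁.not_right_right⟩
    grind [C.mem_cases ht, Above]
  by_cases he₁₃ : G.cup e b₁ b₃
  · obtain ⟨t, ht, hlt, htr, hne, hin⟩ := h.cup₅ e C.mem b₁ T.mem₁.1 b₃ T.mem₃.1 p₂ hp₂ p₃ hp₃
      heb (by order) (by order) l₆ he₁₃ h₁₃p h₃pp ⟨b₁, by simp, T.right₁⟩
      ⟨p₂, by simp, C.gap₁.not_right_right⟩
    grind [C.mem_cases ht, Above]
  · obtain ⟨t, ht, hin⟩ := h.fan p₀ T.left_mem.1 e C.mem b₁ T.mem₁.1 b₂ T.mem₂.1 hpe heb l₂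
      (C.not_cup p₀ T.left_mem.1 b₁ T.mem₁.1 hpe heb)
      (fun h' => he₁₃ ((G.sig e b₁ b₂ b₃ heb l₂ l₃).2.1 h' h₁₂₃).1) ⟨b₂, by simp, T.right₂⟩
    grind [C.mem_cases ht, Above]

lemma false_of_noDividedHole (C : G.Concentrated V p₀ b₁ b₂ b₃ p₁ p₂ p₃ e)
    (h : G.NoDividedHole V) : False := by
  have T := C.triple
  obtain ⟨-, -, -, -, l₅, -⟩ := C.lt_chain
  have F' := C.sdiff_singleton C.right
  have h' := h.sdiff_singleton C.not_cup
  rcases T.cup_left_or_cup_right₁₂ h' with h₁₂ | h₁₂ <;>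
    rcases T.cup_left_or_cup_right₂₃ h' with h₂₃ | h₂₃
  · exact C.false_of_left_left h h₁₂ (T.cup_of_cup_left h' h₂₃)
  · exact C.false_of_left_right h h₁₂ h₂₃ (T.cup_of_cup_left_right h' F'.gap₁.right_mem l₅
      F'.gap₁.not_right_right h₁₂ h₂₃)
  · refine C.false_of_right_left h (T.cup_of_cup_left h' h₂₃)
      (T.cup_of_cup_right_left h' F'.gap₁.right_mem l₅ h₁₂) ?_
    exact F'.cup_of_forall_cup_right T h' h₂₃ fun r hr hpr hrr =>
      absurd hpr (C.lt_of_right r hr.1 hrr).not_gt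
  · exact T.not_cup_right_right h' F'.gap₁.right_mem l₅ h₁₂ h₂₃

end Concentrated

namespace Frame

variable {p₀ p₁ p₂ p₃ : α} [Finite α]

lemma exists_concentrated (F : G.Frame V p₀ p₁ p₂ p₃) {e : α} (heV : e ∈ V) (her : G.right e)
    (he : ∀ u ∈ V, ∀ v ∈ V, u < e → e < v → ¬G.cup u e v)
    (hfew : (V \ {e} ∩ {x | G.right x}).ncard ≤ 3) (hfour : 4 ≤ (V ∩ Set.Ioo p₀ p₁).ncard) :
    ∃ b₁ b₂ b₃, G.Concentrated V p₀ b₁ b₂ b₃ p₁ p₂ p₃ e := by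
  have hV : V \ {e} ∩ {x | G.right x} = (V ∩ {x | G.right x}) \ {e} := by grind
  rw [hV, Set.ncard_sdiff_singleton_of_mem (show e ∈ V ∩ {x | G.right x} from ⟨heV, her⟩)] at hfew
  have hall : V ∩ Set.Ioo p₀ p₁ = V ∩ {x | G.right x} :=
    Set.eq_of_subset_of_ncard_le F.gap₀.inter_Ioo_subset (by omega)
  have hleft : ∀ t ∈ V, G.right t → t ∈ V ∩ Set.Ioo p₀ p₁ := fun t ht htr =>
    hall.superset ⟨ht, htr⟩
  have hthree : (V \ {e} ∩ Set.Ioo p₀ p₁).ncard = 3 := by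
    have hV' : V \ {e} ∩ Set.Ioo p₀ p₁ = (V ∩ Set.Ioo p₀ p₁) \ {e} := by grind
    rw [hV', Set.ncard_sdiff_singleton_of_mem (hleft e heV her)]
    rw [← hall] at hfew
    omega
  obtain ⟨b₁, b₂, b₃, T⟩ := (F.gap₀.sdiff_singleton her).exists_triple hthree
  exact ⟨b₁, b₂, b₃, F, T, heV, (hleft e heV her).2.1, he, fun t ht htr => (hleft t ht htr).2.2,
    her⟩

theorem ncard_left_le_two (F : G.Frame V p₀ p₁ p₂ p₃) (h : G.NoDividedHole V)
    (hfour : 4 ≤ (V ∩ {x | G.right x}).ncard) : (V ∩ Set.Ioo p₀ p₁).ncard ≤ 2 := by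
  induction hn : V.ncard generalizing V with
  | zero => exact ((Set.ncard_le_ncard Set.inter_subset_left).trans hn.le).trans (by norm_num)
  | succ n ih =>
    by_contra! hthree
    by_cases hthree' : (V ∩ Set.Ioo p₀ p₁).ncard = 3
    · obtain ⟨b₁, b₂, b₃, T⟩ := F.gap₀.exists_triple hthree'
      obtain ⟨r, hr, hrp⟩ := Set.exists_mem_notMem_of_ncard_lt_ncard (by omega :
        (V ∩ Set.Ioo p₀ p₁).ncard < (V ∩ {x | G.right x}).ncard)
      exact F.false_of_triple T h ⟨r, hr.1, F.lt_of_right_of_notMem hr.1 hr.2 hrp, hr.2⟩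
    obtain ⟨x, hx⟩ := Set.nonempty_of_ncard_ne_zero (by omega : (V ∩ Set.Ioo p₀ p₁).ncard ≠ 0)
    obtain ⟨e, heV, her, he⟩ := G.exists_extreme V ⟨x, F.gap₀.inter_Ioo_subset hx⟩
    have hfew : (V \ {e} ∩ {x | G.right x}).ncard ≤ 3 := by
      by_contra! hmany
      have hleft := ncard_sub_one_le_ncard_sdiff_singleton_inter V (Set.Ioo p₀ p₁) e
      have := ih (F.sdiff_singleton her) (h.sdiff_singleton he) hmany
        (by rw [Set.ncard_sdiff_singleton_of_mem heV]; omega)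
      omega
    obtain ⟨b₁, b₂, b₃, C⟩ := F.exists_concentrated heV her he hfew (by omega)
    exact C.false_of_noDividedHole h

open OrderDual in
theorem ncard_right_le_two (F : G.Frame V p₀ p₁ p₂ p₃) (h : G.NoDividedHole V)
    (hfour : 4 ≤ (V ∩ {x | G.right x}).ncard) : (V ∩ Set.Ioo p₂ p₃).ncard ≤ 2 := by
  have hdual := F.dual.ncard_left_le_two h.dual hfour
  rwa [Set.Ioo_toDual] at hdual

end Frame

end DividedSignotope

/-! ### The signotope of a point set seen from an apex -/

lemma ConvexPentagon.exists_mem_convexHull {A B : Finset Pt} {a b c d e : Pt}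
    (h : ConvexPentagon a b c d e) (hnh : ¬∃ H, DividedFiveHole A B H)
    (hsub : ({a, b, c, d, e} : Set Pt) ⊆ ↑(A ∪ B)) (hA : ∃ p ∈ ({a, b, c, d, e} : Set Pt), p ∈ A)
    (hB : ∃ p ∈ ({a, b, c, d, e} : Set Pt), p ∈ B) :
    ∃ p ∈ A ∪ B, p ∉ ({a, b, c, d, e} : Set Pt) ∧
      p ∈ convexHull ℝ ({a, b, c, d, e} : Set Pt) := by
  by_contra! hempty
  refine hnh ⟨{a, b, c, d, e}, ⟨?_, h.card_eq_five, ?_, ?_⟩, ?_, ?_⟩ <;>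
    simp only [← Finset.mem_coe, ← Finset.coe_subset, Finset.coe_insert, Finset.coe_singleton]
      at hsub hempty ⊢
  · exact hsub
  · exact h.convexPos
  · exact hempty
  · exact hA
  · exact hB

/-- An `ℓ`-divided point set `A ∪ B` in general position, with `ℓ` the line `x = x₀`, seen from a
point `apex` of `A` in such a way that all other points lie strictly to the left of the directed
line through `apex` in direction `dir`. The clockwise angular order around `apex` is then
linear. -/
structure AngularView where
  x₀ : ℝ
  A : Finset Pt
  B : Finset Pt
  apex : Pt
  dir : Pt
  lt_of_mem_A : ∀ p ∈ A, p.1 < x₀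
  lt_of_mem_B : ∀ p ∈ B, x₀ < p.1
  genPos : GenPos (↑(A ∪ B) : Set Pt)
  apex_mem : apex ∈ A
  dir_pos : ∀ p ∈ A ∪ B, p ≠ apex → 0 < cross2 dir (p - apex)

namespace AngularView

variable (𝓥 : AngularView)

/-- The points of the view other than its apex, to be ordered clockwise around the apex. -/
def Point : Type := {p : Pt // p ∈ (𝓥.A ∪ 𝓥.B).erase 𝓥.apex}

variable {𝓥}

/-- The underlying point of the plane. -/
def Point.toPt (x : 𝓥.Point) : Pt := x.1

instance : CoeOut 𝓥.Point Pt := ⟨Point.toPt⟩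

instance : Finite 𝓥.Point := inferInstanceAs (Finite {p : Pt // p ∈ _})

lemma Point.toPt_injective : Function.Injective (Point.toPt : 𝓥.Point → Pt) :=
  Subtype.val_injective

lemma Point.mem (x : 𝓥.Point) : (x : Pt) ∈ 𝓥.A ∪ 𝓥.B := Finset.mem_of_mem_erase x.2

lemma Point.ne_apex (x : 𝓥.Point) : (x : Pt) ≠ 𝓥.apex := Finset.ne_of_mem_erase x.2

lemma apex_mem_union : 𝓥.apex ∈ 𝓥.A ∪ 𝓥.B := Finset.mem_union_left _ 𝓥.apex_mem

/-- The distance from the apex to the projection of `x`, in the direction `dir`, measured in units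
of the distance of `x` from the line through the apex: the cotangent of the angle from `dir`. -/
def Point.slope (x : 𝓥.Point) : ℝ :=
  dotp 𝓥.dir (x - 𝓥.apex) / cross2 𝓥.dir (x - 𝓥.apex)

lemma Point.dir_pos (x : 𝓥.Point) : 0 < cross2 𝓥.dir (x - 𝓥.apex) :=
  𝓥.dir_pos x x.mem x.ne_apex

lemma Point.slope_sub_slope (x y : 𝓥.Point) :
    (y.slope - x.slope) * (cross2 𝓥.dir (x - 𝓥.apex) * cross2 𝓥.dir (y - 𝓥.apex)) =
      -(dotp 𝓥.dir 𝓥.dir * orient 𝓥.apex x y) := by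
  have hx := x.dir_pos.ne'
  have hy := y.dir_pos.ne'
  simp only [Point.slope, orient]
  field_simp
  simp only [dotp, cross2, Prod.fst_sub, Prod.snd_sub]
  ring

lemma orient_ne_zero {x y z : 𝓥.Point} (hxy : x ≠ y) (hxz : x ≠ z) (hyz : y ≠ z) :
    orient (x : Pt) y z ≠ 0 :=
  𝓥.genPos.orient_ne_zero x.mem y.mem z.mem (Point.toPt_injective.ne hxy)
    (Point.toPt_injective.ne hxz) (Point.toPt_injective.ne hyz)

lemma orient_apex_ne_zero {x y : 𝓥.Point} (hxy : x ≠ y) : orient 𝓥.apex x y ≠ 0 :=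
  𝓥.genPos.orient_ne_zero apex_mem_union x.mem y.mem x.ne_apex.symm y.ne_apex.symm
    (Point.toPt_injective.ne hxy)

lemma dir_ne_zero (x : 𝓥.Point) : 𝓥.dir ≠ 0 := fun h => by
  have := x.dir_pos
  simp [h, cross2] at this

lemma Point.slope_injective : Function.Injective (Point.slope : 𝓥.Point → ℝ) := by
  intro x y h
  by_contra hxy
  have key := x.slope_sub_slope y
  rw [h, sub_self, zero_mul, eq_comm, neg_eq_zero] at key
  exact mul_ne_zero (dotp_self_pos (dir_ne_zero x)).ne' (orient_apex_ne_zero hxy) key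

instance Point.instLinearOrder : LinearOrder 𝓥.Point :=
  LinearOrder.lift' Point.slope Point.slope_injective

lemma lt_iff {x y : 𝓥.Point} : x < y ↔ orient 𝓥.apex x y < 0 := by
  have hpos := mul_pos x.dir_pos y.dir_pos
  have hdir := dotp_self_pos (dir_ne_zero x)
  change x.slope < y.slope ↔ _
  rw [← sub_pos, ← mul_pos_iff_of_pos_right hpos, x.slope_sub_slope, ← mul_neg,
    mul_pos_iff_of_pos_left hdir, neg_pos]

attribute [irreducible] Point.instLinearOrder

/-- The height of `x` above the dividing line, normalised by its distance from the line through
the apex, so that it is an affine function of the projective transformation sending the apex to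
infinity. -/
def Point.height (x : 𝓥.Point) : ℝ :=
  ((x : Pt).1 - 𝓥.x₀) / cross2 𝓥.dir (x - 𝓥.apex)

lemma orient_mul_eq (x y z : 𝓥.Point) :
    orient (x : Pt) y z * (𝓥.x₀ - 𝓥.apex.1) =
      orient 𝓥.apex y z * cross2 𝓥.dir (x - 𝓥.apex) * (y.height - x.height) +
        orient 𝓥.apex x y * cross2 𝓥.dir (z - 𝓥.apex) * (y.height - z.height) := by
  have hx := x.dir_pos.ne'
  have hy := y.dir_pos.ne'
  have hz := z.dir_pos.ne'
  simp only [Point.height, orient]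
  field_simp
  simp only [cross2, Prod.fst_sub, Prod.snd_sub]
  ring

/-- The points of an angular view form a divided signotope: a triple is a cup if it turns left. -/
def signotope (𝓥 : AngularView) : DividedSignotope 𝓥.Point where
  cup x y z := 0 < orient (x : Pt) y z
  height := Point.height
  sig w x y z hwx hxy hyz := by
    have hwy := lt_iff.1 (hwx.trans hxy)
    have hwz := lt_iff.1 (hwx.trans (hxy.trans hyz))
    have hxz := lt_iff.1 (hxy.trans hyz)
    rw [lt_iff] at hwx hxy hyz
    have h₁ := sign_of_combination hwy hwz hwx (orient_plucker₁ 𝓥.apex w x y z)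
    have h₂ := sign_of_combination hxy hxz hwx (orient_plucker₂ 𝓥.apex w x y z)
    have h₃ := sign_of_combination hxy hyz hwy (orient_plucker₃ 𝓥.apex w x y z)
    have h₄ := sign_of_combination hxz hyz hwz (orient_plucker₄ 𝓥.apex w x y z)
    exact ⟨h₁.1, fun hr hs => ⟨h₂.1 hr hs, h₃.1 hr hs⟩, h₄.1, h₁.2,
      fun hr hs => ⟨h₂.2 hr hs, h₃.2 hr hs⟩, h₄.2⟩
  not_cup_of_height_le x y z hxy hyz hx hz := by
    have key := orient_mul_eq x y z
    have ha := sub_pos.2 (𝓥.lt_of_mem_A _ 𝓥.apex_mem)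
    rw [lt_iff] at hxy hyz
    have h₁ := mul_nonpos_of_nonpos_of_nonneg
      (mul_neg_of_neg_of_pos hyz x.dir_pos).le (sub_nonneg.2 hx)
    have h₂ := mul_nonpos_of_nonpos_of_nonneg
      (mul_neg_of_neg_of_pos hxy z.dir_pos).le (sub_nonneg.2 hz)
    exact not_lt.2 (nonpos_of_mul_nonpos_left (key.trans_le (add_nonpos h₁ h₂)) ha)

lemma not_cup_iff {x y z : 𝓥.Point} (hxy : x < y) (hyz : y < z) :
    ¬𝓥.signotope.cup x y z ↔ 0 < orient (x : Pt) z y := by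
  rw [orient_swap_right, neg_pos]
  exact not_lt.trans (orient_ne_zero hxy.ne (hxy.trans hyz).ne hyz.ne).le_iff_lt

lemma orient_reverse_pos {x y z : 𝓥.Point} (hxy : x < y) (hyz : y < z)
    (h : ¬𝓥.signotope.cup x y z) : 0 < orient (z : Pt) y x := by
  rw [orient_rotate]
  exact (not_cup_iff hxy hyz).1 h

lemma orient_apex_pos {x y : 𝓥.Point} (hxy : x < y) : 0 < orient 𝓥.apex y x := by
  rw [orient_swap_right]
  exact neg_pos.2 (lt_iff.1 hxy)

lemma right_iff {x : 𝓥.Point} : 𝓥.signotope.right x ↔ (x : Pt) ∈ 𝓥.B := by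
  have key : 𝓥.signotope.right x ↔ 𝓥.x₀ < (x : Pt).1 := by
    rw [← sub_pos, ← div_pos_iff_of_pos_right x.dir_pos]; rfl
  rw [key]
  refine ⟨fun h => (Finset.mem_union.1 x.mem).resolve_left fun hA => ?_, 𝓥.lt_of_mem_B _⟩
  exact (h.trans (𝓥.lt_of_mem_A _ hA)).false

lemma not_right_iff {x : 𝓥.Point} : ¬𝓥.signotope.right x ↔ (x : Pt) ∈ 𝓥.A := by
  rw [right_iff]
  refine ⟨(Finset.mem_union.1 x.mem).resolve_right, fun hA hB => ?_⟩
  exact ((𝓥.lt_of_mem_B _ hB).trans (𝓥.lt_of_mem_A _ hA)).false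

lemma lt_of_orient_nonneg {x y : 𝓥.Point} (hxy : x ≠ y) (h : 0 ≤ orient 𝓥.apex y x) : x < y := by
  rw [orient_swap_right, neg_nonneg] at h
  exact lt_iff.2 (h.lt_of_ne (orient_apex_ne_zero hxy))

lemma above_of_orient_nonneg {x y t : 𝓥.Point} (h : 0 ≤ orient (x : Pt) y t) :
    𝓥.signotope.Above x y t := by
  rw [orient_swap_right, neg_nonneg] at h
  exact fun _ _ => not_lt.2 h

lemma below_of_orient_nonneg {x y t : 𝓥.Point} (h : 0 ≤ orient (y : Pt) x t) :
    𝓥.signotope.Below x y t := by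
  rw [← orient_rotate] at h
  exact fun hxt hty => h.lt_of_ne' (orient_ne_zero hxt.ne (hxt.trans hty).ne hty.ne)

section Hole

variable {a b c d e : 𝓥.Point}

lemma exists_lt_of_mem_convexHull {s : Set 𝓥.Point} {t : 𝓥.Point} (hts : t ∉ s)
    (ht : (t : Pt) ∈ convexHull ℝ (Point.toPt '' s)) : ∃ x ∈ s, x < t := by
  by_contra! hs
  have := orient_pos_of_mem_convexHull (p := (t : Pt)) (q := 𝓥.apex) (x := t) ?_ ht
  · exact (orient_self_outer (t : Pt) 𝓥.apex ▸ this).false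
  rintro _ ⟨x, hx, rfl⟩
  rw [← orient_rotate, orient_swap_right, neg_pos, ← lt_iff]
  exact (hs x hx).lt_of_ne fun h => hts (h ▸ hx)

lemma exists_gt_of_mem_convexHull {s : Set 𝓥.Point} {t : 𝓥.Point} (hts : t ∉ s)
    (ht : (t : Pt) ∈ convexHull ℝ (Point.toPt '' s)) : ∃ x ∈ s, t < x := by
  by_contra! hs
  have := orient_pos_of_mem_convexHull (p := 𝓥.apex) (q := (t : Pt)) (x := t) ?_ ht
  · exact (orient_self_right 𝓥.apex (t : Pt) ▸ this).false
  rintro _ ⟨x, hx, rfl⟩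
  rw [orient_swap_right, neg_pos, ← lt_iff]
  exact (hs x hx).lt_of_ne fun h => hts (h ▸ hx)

lemma apex_notMem_convexHull (s : Set 𝓥.Point) :
    𝓥.apex ∉ convexHull ℝ (Point.toPt '' s) := by
  intro h
  have := orient_pos_of_mem_convexHull (p := 𝓥.apex) (q := 𝓥.apex + 𝓥.dir) ?_ h
  · exact (orient_self_outer 𝓥.apex _ ▸ this).false
  rintro _ ⟨x, -, rfl⟩
  simpa only [orient, add_sub_cancel_left] using x.dir_pos

lemma exists_notMem_of_pentagon (hnh : ¬∃ H, DividedFiveHole 𝓥.A 𝓥.B H)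
    (h : ConvexPentagon (a : Pt) b c d e) {l r : 𝓥.Point}
    (hlr : ∀ x ∈ [a, b, c, d, e], l ≤ x ∧ x ≤ r)
    (hB : ∃ v ∈ [a, b, c, d, e], 𝓥.signotope.right v)
    (hA : ∃ v ∈ [a, b, c, d, e], ¬𝓥.signotope.right v) :
    ∃ t : 𝓥.Point, t ∉ [a, b, c, d, e] ∧ l < t ∧ t < r ∧
      (t : Pt) ∈ convexHull ℝ ({(a : Pt), (b : Pt), (c : Pt), (d : Pt), (e : Pt)} : Set Pt) := by
  have himage : ({(a : Pt), (b : Pt), (c : Pt), (d : Pt), (e : Pt)} : Set Pt) =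
      Point.toPt '' {x | x ∈ [a, b, c, d, e]} := by
    ext p
    simp [eq_comm]
  rw [himage]
  obtain ⟨v, hv, hvB⟩ := hB
  obtain ⟨u, hu, huA⟩ := hA
  obtain ⟨p, hp, hps, hpc⟩ := h.exists_mem_convexHull hnh
    (by rw [himage]; rintro _ ⟨x, -, rfl⟩; exact x.mem)
    (by rw [himage]; exact ⟨u, ⟨u, hu, rfl⟩, not_right_iff.1 huA⟩)
    (by rw [himage]; exact ⟨v, ⟨v, hv, rfl⟩, right_iff.1 hvB⟩)
  rw [himage] at hps hpc
  have hpa : p ≠ 𝓥.apex := fun h => apex_notMem_convexHull _ (h ▸ hpc)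
  let t : 𝓥.Point := ⟨p, Finset.mem_erase.2 ⟨hpa, hp⟩⟩
  have ht : t ∉ [a, b, c, d, e] := fun ht => hps ⟨t, ht, rfl⟩
  obtain ⟨x, hx, hxt⟩ := exists_lt_of_mem_convexHull (t := t) ht hpc
  obtain ⟨y, hy, hty⟩ := exists_gt_of_mem_convexHull (t := t) ht hpc
  exact ⟨t, ht, (hlr x hx).1.trans_lt hxt, hty.trans_le (hlr y hy).2, hpc⟩

lemma exists_notMem_of_apex_pentagon (hnh : ¬∃ H, DividedFiveHole 𝓥.A 𝓥.B H)
    (h : ConvexPentagon 𝓥.apex a b c d) (hB : ∃ v ∈ [a, b, c, d], 𝓥.signotope.right v) :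
    ∃ t : 𝓥.Point, t ∉ [a, b, c, d] ∧
      (t : Pt) ∈ convexHull ℝ ({𝓥.apex, (a : Pt), (b : Pt), (c : Pt), (d : Pt)} : Set Pt) := by
  have himage : ({(a : Pt), (b : Pt), (c : Pt), (d : Pt)} : Set Pt) =
      Point.toPt '' {x | x ∈ [a, b, c, d]} := by
    ext p
    simp [eq_comm]
  rw [himage]
  obtain ⟨v, hv, hvB⟩ := hB
  obtain ⟨p, hp, hps, hpc⟩ := h.exists_mem_convexHull hnh
    (by
      rw [himage]
      rintro _ (rfl | ⟨x, -, rfl⟩)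
      exacts [apex_mem_union, x.mem])
    ⟨𝓥.apex, Set.mem_insert _ _, 𝓥.apex_mem⟩
    (by rw [himage]; exact ⟨v, Or.inr ⟨v, hv, rfl⟩, right_iff.1 hvB⟩)
  rw [himage] at hps hpc
  have hpa : p ≠ 𝓥.apex := fun h => hps (Or.inl h)
  exact ⟨⟨p, Finset.mem_erase.2 ⟨hpa, hp⟩⟩, fun ht => hps (Or.inr ⟨_, ht, rfl⟩), hpc⟩

end Hole

section Pentagon

variable {l r s u v w x y z : 𝓥.Point}

lemma orient_pos_of_strip (hls : l < s) (hsr : s < r) (hlu : l < u) (hur : u < r)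
    (hs : 𝓥.signotope.cup l s r) (hu : ¬𝓥.signotope.cup l u r) :
    0 < orient (l : Pt) s u ∧ 0 < orient (s : Pt) r u := by
  rw [not_cup_iff hlu hur] at hu
  have hs : 0 < orient (l : Pt) s r := hs
  have hlr := lt_iff.1 (hls.trans hsr)
  rw [lt_iff] at hls hsr hlu hur
  refine ⟨(sign_of_combination hlr hlu hls (orient_plucker₁ 𝓥.apex l s r u)).1 hs hu,
    (sign_of_combination hlr hur hsr ?_).1 hs hu⟩
  simp only [orient, cross2, Prod.fst_sub, Prod.snd_sub]
  ring

lemma convexPentagon_of_fan (hwx : w < x) (hxy : x < y) (hyz : y < z)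
    (hwxy : ¬𝓥.signotope.cup w x y) (hxyz : ¬𝓥.signotope.cup x y z) :
    ConvexPentagon 𝓥.apex z y x w := by
  obtain ⟨hwxz, -⟩ := (𝓥.signotope.sig w x y z hwx hxy hyz).2.2.2.2.1 hwxy hxyz
  exact .of_quadrilaterals (orient_apex_pos hyz) (orient_reverse_pos hxy hyz hxyz)
    (orient_apex_pos (hxy.trans hyz)) (orient_apex_pos hxy) (orient_apex_pos hwx)
    (orient_apex_pos (hwx.trans (hxy.trans hyz)))
    (orient_reverse_pos hwx (hxy.trans hyz) hwxz) (orient_apex_pos (hwx.trans hxy))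
    (orient_reverse_pos hwx hxy hwxy)

lemma convexPentagon_of_cup₅ (hvw : v < w) (hwx : w < x) (hxy : x < y) (hyz : y < z)
    (hvwx : 𝓥.signotope.cup v w x) (hwxy : 𝓥.signotope.cup w x y)
    (hxyz : 𝓥.signotope.cup x y z) : ConvexPentagon (v : Pt) w x y z := by
  obtain ⟨hvwy, hvxy⟩ := (𝓥.signotope.sig v w x y hvw hwx hxy).2.1 hvwx hwxy
  obtain ⟨-, hwyz⟩ := (𝓥.signotope.sig w x y z hwx hxy hyz).2.1 hwxy hxyz
  obtain ⟨hvwz, hvyz⟩ := (𝓥.signotope.sig v w y z hvw (hwx.trans hxy) hyz).2.1 hvwy hwyz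
  obtain ⟨hvxz, -⟩ := (𝓥.signotope.sig v x y z (hvw.trans hwx) hxy hyz).2.1 hvxy hxyz
  exact .of_quadrilaterals hvwx hwxy hvwy hvxy hvyz hvwz hwyz hvxz hxyz

lemma convexPentagon_of_cup₄ (hlx : l < x) (hxy : x < y) (hyr : y < r) (hlu : l < u) (hur : u < r)
    (hlxy : 𝓥.signotope.cup l x y) (hxyr : 𝓥.signotope.cup x y r)
    (hlur : ¬𝓥.signotope.cup l u r) : ConvexPentagon (l : Pt) x y r u := by
  obtain ⟨hlxr, hlyr⟩ := (𝓥.signotope.sig l x y r hlx hxy hyr).2.1 hlxy hxyr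
  obtain ⟨hlxu, hxru⟩ := orient_pos_of_strip hlx (hxy.trans hyr) hlu hur hlxr hlur
  obtain ⟨hlyu, hyru⟩ := orient_pos_of_strip (hlx.trans hxy) hyr hlu hur hlyr hlur
  exact .of_quadrilaterals hlxy hxyr hlxr hlyr ((not_cup_iff hlu hur).1 hlur) hlxu hxru hlyu hyru

lemma convexPentagon_of_cap₄ (hlx : l < x) (hxy : x < y) (hyr : y < r) (hlu : l < u) (hur : u < r)
    (hlxy : ¬𝓥.signotope.cup l x y) (hxyr : ¬𝓥.signotope.cup x y r)
    (hlur : 𝓥.signotope.cup l u r) : ConvexPentagon (r : Pt) y x l u := by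
  obtain ⟨hlxr, hlyr⟩ := (𝓥.signotope.sig l x y r hlx hxy hyr).2.2.2.2.1 hlxy hxyr
  obtain ⟨hlux, hurx⟩ := orient_pos_of_strip hlu hur hlx (hxy.trans hyr) hlur hlxr
  obtain ⟨hluy, hury⟩ := orient_pos_of_strip hlu hur (hlx.trans hxy) hyr hlur hlyr
  have hxr := hxy.trans hyr
  have hly := hlx.trans hxy
  refine .of_quadrilaterals (orient_reverse_pos hxy hyr hxyr) (orient_reverse_pos hlx hxy hlxy)
    (orient_reverse_pos hly hyr hlyr) (orient_reverse_pos hlx hxr hlxr) ?_ ?_ ?_ ?_ ?_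
  · rwa [← orient_rotate]
  · rwa [orient_rotate]
  · rwa [← orient_rotate]
  · rwa [orient_rotate]
  · rwa [← orient_rotate]

end Pentagon

lemma exists_not_above_of_fan (hnh : ¬∃ H, DividedFiveHole 𝓥.A 𝓥.B H) {w x y z : 𝓥.Point}
    (hwx : w < x) (hxy : x < y) (hyz : y < z) (hwxy : ¬𝓥.signotope.cup w x y)
    (hxyz : ¬𝓥.signotope.cup x y z) (hB : ∃ v ∈ [w, x, y, z], 𝓥.signotope.right v) :
    ∃ t, ¬(𝓥.signotope.Above w x t ∧ 𝓥.signotope.Above x y t ∧ 𝓥.signotope.Above y z t) := by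
  have h := convexPentagon_of_fan hwx hxy hyz hwxy hxyz
  obtain ⟨t, hts, ht⟩ := exists_notMem_of_apex_pentagon hnh h (by grind)
  obtain ⟨hz, hzy, hyx, hxw, hw⟩ := h.orient_edges_nonneg ht
  have htz : t < z := lt_of_orient_nonneg (by grind) hz
  have hwt : w < t := lt_of_orient_nonneg (by grind) (by rwa [orient_rotate])
  refine ⟨t, fun ⟨hwx', hxy', hyz'⟩ => ?_⟩
  obtain htx | htx := lt_or_ge t x
  · exact hwx' hwt htx (below_of_orient_nonneg hxw hwt htx)
  replace htx : x < t := htx.lt_of_ne (by grind)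
  obtain hty | hty := lt_or_ge t y
  · exact hxy' htx hty (below_of_orient_nonneg hyx htx hty)
  replace hty : y < t := hty.lt_of_ne (by grind)
  exact hyz' hty htz (below_of_orient_nonneg hzy hty htz)

lemma noDividedHole_signotope (hnh : ¬∃ H, DividedFiveHole 𝓥.A 𝓥.B H) :
    𝓥.signotope.NoDividedHole Set.univ where
  fan _ _ _ _ _ _ _ _ hwx hxy hyz hwxy hxyz hB := by
    obtain ⟨t, ht⟩ := exists_not_above_of_fan hnh hwx hxy hyz hwxy hxyz hB
    exact ⟨t, trivial, ht⟩
  cup₅ v _ w _ x _ y _ z _ hvw hwx hxy hyz hvwx hwxy hxyz hB hA := by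
    have hlr : ∀ p ∈ [v, w, x, y, z], v ≤ p ∧ p ≤ z := by
      simp only [List.forall_mem_cons]
      refine ⟨?_, ?_, ?_, ?_, ?_, by simp⟩ <;> constructor <;> order
    have h := convexPentagon_of_cup₅ hvw hwx hxy hyz hvwx hwxy hxyz
    obtain ⟨t, hts, hlt, htr, ht⟩ := exists_notMem_of_pentagon hnh h hlr hB hA
    obtain ⟨hvw', hwx', hxy', hyz', hzv'⟩ := h.orient_edges_nonneg ht
    exact ⟨t, trivial, hlt, htr, by grind, above_of_orient_nonneg hvw',
      above_of_orient_nonneg hwx', above_of_orient_nonneg hxy', above_of_orient_nonneg hyz',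
      below_of_orient_nonneg hzv'⟩
  cup₄ l _ x _ y _ r _ u _ hlx hxy hyr hlu hur hlxy hxyr hlur hB hA := by
    have hlr : ∀ p ∈ [l, x, y, r, u], l ≤ p ∧ p ≤ r := by
      simp only [List.forall_mem_cons]
      refine ⟨?_, ?_, ?_, ?_, ?_, by simp⟩ <;> constructor <;> order
    have h := convexPentagon_of_cup₄ hlx hxy hyr hlu hur hlxy hxyr hlur
    obtain ⟨t, hts, hlt, htr, ht⟩ := exists_notMem_of_pentagon hnh h hlr hB hA
    obtain ⟨hlx', hxy', hyr', hru', hul'⟩ := h.orient_edges_nonneg ht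
    exact ⟨t, trivial, hlt, htr, by grind, above_of_orient_nonneg hlx',
      above_of_orient_nonneg hxy', above_of_orient_nonneg hyr', below_of_orient_nonneg hul',
      below_of_orient_nonneg hru'⟩
  cap₄ l _ x _ y _ r _ u _ hlx hxy hyr hlu hur hlxy hxyr hlur hB hA := by
    have hlr : ∀ p ∈ [r, y, x, l, u], l ≤ p ∧ p ≤ r := by
      simp only [List.forall_mem_cons]
      refine ⟨?_, ?_, ?_, ?_, ?_, by simp⟩ <;> constructor <;> order
    have h := convexPentagon_of_cap₄ hlx hxy hyr hlu hur hlxy hxyr hlur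
    obtain ⟨t, hts, hlt, htr, ht⟩ := exists_notMem_of_pentagon hnh h hlr (by grind) (by grind)
    obtain ⟨hry, hyx, hxl, hlu', hur'⟩ := h.orient_edges_nonneg ht
    exact ⟨t, trivial, hlt, htr, by grind, below_of_orient_nonneg hxl,
      below_of_orient_nonneg hyx, below_of_orient_nonneg hry, above_of_orient_nonneg hlu',
      above_of_orient_nonneg hur'⟩

end AngularView

/-! ### Wedges -/

section Wedge

variable {a p q r x : Pt} {U : Set Pt}

lemma mem_wedge_of_neg (h : orient a p q < 0) :
    x ∈ Wedge a p q ↔ orient a p x ≤ 0 ∧ 0 ≤ orient a q x := by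
  rw [Wedge, if_pos (show cross2 (p - a) (q - a) ≤ 0 from h.le)]; rfl

lemma mem_wedge_of_pos (h : 0 < orient a p q) :
    x ∈ Wedge a p q ↔ orient a p x ≤ 0 ∨ 0 ≤ orient a q x := by
  rw [Wedge, if_neg (show ¬cross2 (p - a) (q - a) ≤ 0 from h.not_ge)]; rfl

lemma wedge_union_wedge (hpq : orient a p q < 0) (hqr : orient a q r < 0)
    (hpr : orient a p r ≠ 0) : Wedge a p q ∪ Wedge a q r = Wedge a p r := by
  ext x
  have key := orient_plucker a p q r x
  rw [Set.mem_union, mem_wedge_of_neg hpq, mem_wedge_of_neg hqr]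
  obtain hpr | hpr := hpr.lt_or_gt
  · rw [mem_wedge_of_neg hpr]
    constructor
    · rintro (⟨hp, hq⟩ | ⟨hq, hr⟩)
      · refine ⟨hp, ?_⟩
        by_contra! hr
        nlinarith
      · refine ⟨?_, hr⟩
        by_contra! hp
        nlinarith
    · rintro ⟨hp, hr⟩
      exact (le_total 0 (orient a q x)).imp (⟨hp, ·⟩) (⟨·, hr⟩)
  · rw [mem_wedge_of_pos hpr]
    constructor
    · exact Or.imp And.left And.right
    · rintro (hp | hr)
      · by_contra! h
        have hq := h.1 hp
        have hr := h.2 hq.le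
        nlinarith
      · by_contra! h
        have hq : 0 < orient a q x := not_le.1 fun hq => (h.2 hq).not_ge hr
        have hp : 0 < orient a p x := not_le.1 fun hp => (h.1 hp).not_ge hq.le
        nlinarith

/-- A point `x` is the midpoint of `x ± t (p - q)`, and both of these lie in a reflex wedge from
`p` to `q` once `t` is large. -/
lemma orient_neg_of_wedge_subset (hU : Convex ℝ U) (hne : U ≠ Set.univ) (hpq : orient a p q ≠ 0)
    (hsub : Wedge a p q ⊆ U) : orient a p q < 0 := by
  refine hpq.lt_or_gt.resolve_right fun hpos => hne (Set.eq_univ_of_forall fun x => ?_)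
  let t := (|orient a p x| + |orient a q x|) / orient a p q
  have ht : t * orient a p q = |orient a p x| + |orient a q x| := div_mul_cancel₀ _ hpq
  have hleft : x + t • (p - q) ∈ U := by
    refine hsub ((mem_wedge_of_pos hpos).2 (Or.inl ?_))
    have : orient a p (x + t • (p - q)) = orient a p x - t * orient a p q := by
      simp only [orient, cross2, Prod.fst_sub, Prod.snd_sub, Prod.fst_add, Prod.snd_add,
        Prod.smul_fst, Prod.smul_snd, smul_eq_mul]
      ring
    linarith [le_abs_self (orient a p x), abs_nonneg (orient a q x)]
  have hright : x - t • (p - q) ∈ U := by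
    refine hsub ((mem_wedge_of_pos hpos).2 (Or.inr ?_))
    have : orient a q (x - t • (p - q)) = orient a q x + t * orient a p q := by
      simp only [orient, cross2, Prod.fst_sub, Prod.snd_sub,
        Prod.smul_fst, Prod.smul_snd, smul_eq_mul]
      ring
    linarith [neg_abs_le (orient a q x), abs_nonneg (orient a p x)]
  have hmid := hU.midpoint_mem hleft hright
  rwa [midpoint_eq_smul_add, add_add_sub_cancel, ← two_smul ℝ x, smul_smul, invOf_eq_inv,
    inv_mul_cancel₀ two_ne_zero, one_smul] at hmid

lemma union_wedges_eq_wedge {p₀ p₁ p₂ p₃ : Pt} (h₀₁ : orient a p₀ p₁ ≠ 0)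
    (h₁₂ : orient a p₁ p₂ ≠ 0) (h₂₃ : orient a p₂ p₃ ≠ 0) (h₀₂ : orient a p₀ p₂ ≠ 0)
    (h₀₃ : orient a p₀ p₃ ≠ 0)
    (hconv : Convex ℝ (Wedge a p₀ p₁ ∪ Wedge a p₁ p₂ ∪ Wedge a p₂ p₃))
    (hne : Wedge a p₀ p₁ ∪ Wedge a p₁ p₂ ∪ Wedge a p₂ p₃ ≠ Set.univ) :
    (orient a p₀ p₁ < 0 ∧ orient a p₁ p₂ < 0 ∧ orient a p₂ p₃ < 0 ∧ orient a p₀ p₃ < 0) ∧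
      Wedge a p₀ p₁ ∪ Wedge a p₁ p₂ ∪ Wedge a p₂ p₃ = Wedge a p₀ p₃ := by
  have hneg {p q : Pt} (hpq : orient a p q ≠ 0) := orient_neg_of_wedge_subset hconv hne hpq
  have n₀₁ := hneg h₀₁ (Set.subset_union_left.trans Set.subset_union_left)
  have n₁₂ := hneg h₁₂ (Set.subset_union_right.trans Set.subset_union_left)
  have n₂₃ := hneg h₂₃ Set.subset_union_right
  have u₀₂ := wedge_union_wedge n₀₁ n₁₂ h₀₂
  have n₀₂ := hneg h₀₂ (u₀₂ ▸ Set.subset_union_left)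
  have u₀₃ := wedge_union_wedge n₀₂ n₂₃ h₀₃
  rw [← u₀₂] at u₀₃
  exact ⟨⟨n₀₁, n₁₂, n₂₃, hneg h₀₃ u₀₃.ge⟩, u₀₃⟩

lemma apex_mem_wedge (hpq : orient a p q < 0) : a ∈ Wedge a p q := by
  simp only [mem_wedge_of_neg hpq, orient_self_outer, le_refl, and_self]

lemma left_mem_wedge (hpq : orient a p q < 0) : p ∈ Wedge a p q := by
  rw [mem_wedge_of_neg hpq, orient_self_right, orient_swap_right]
  exact ⟨le_rfl, (neg_pos.2 hpq).le⟩

lemma right_mem_wedge (hpq : orient a p q < 0) : q ∈ Wedge a p q := by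
  rw [mem_wedge_of_neg hpq, orient_self_right]
  exact ⟨hpq.le, le_rfl⟩

lemma cross2_sub_pos_of_mem_wedge (hpq : orient a p q < 0) (hx : x ∈ Wedge a p q) (hxa : x ≠ a) :
    0 < cross2 (q - p) (x - a) := by
  rw [mem_wedge_of_neg hpq] at hx
  have hsub : cross2 (q - p) (x - a) = orient a q x - orient a p x := by
    simp only [orient, cross2, Prod.fst_sub, Prod.snd_sub]; ring
  rw [hsub]
  refine (sub_nonneg.2 (hx.1.trans hx.2)).lt_of_ne' fun h => hxa (sub_eq_zero.1 ?_)
  have hp : orient a p x = 0 := by linarith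
  have hq : orient a q x = 0 := by linarith
  have hcramer : orient a p q • (x - a) = orient a p x • (q - a) - orient a q x • (p - a) := by
    ext <;> simp only [orient, cross2, Prod.fst_sub, Prod.snd_sub, Prod.smul_fst, Prod.smul_snd,
      smul_eq_mul] <;> ring
  rw [hp, hq, zero_smul, zero_smul, sub_zero] at hcramer
  exact (smul_eq_zero.1 hcramer).resolve_left hpq.ne

end Wedge

lemma DividedFiveHole.of_filter {A B H : Finset Pt} {U : Set Pt} [DecidablePred (· ∈ U)]
    (hU : Convex ℝ U) (h : DividedFiveHole (A.filter (· ∈ U)) (B.filter (· ∈ U)) H) :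
    DividedFiveHole A B H := by
  obtain ⟨⟨hsub, hcard, hconv, hempty⟩, hA, hB⟩ := h
  rw [← Finset.filter_union] at hsub hempty
  have hHU : convexHull ℝ (H : Set Pt) ⊆ U :=
    convexHull_min (fun p hp => (Finset.mem_filter.1 (hsub hp)).2) hU
  refine ⟨⟨hsub.trans (Finset.filter_subset _ _), hcard, hconv, fun p hp hpH hpc => ?_⟩,
    hA.mono ?_, hB.mono ?_⟩
  · exact hempty p (Finset.mem_filter.2 ⟨hp, hHU hpc⟩) hpH hpc
  all_goals exact Set.inter_subset_inter_right _ (Finset.coe_subset.2 (Finset.filter_subset _ _))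

namespace AngularView

variable {𝓥 : AngularView}

lemma mem_Icc_of_mem_wedge {p q x : 𝓥.Point} (hpq : p < q)
    (hx : (x : Pt) ∈ Wedge 𝓥.apex p q) : x ∈ Set.Icc p q := by
  rw [mem_wedge_of_neg (lt_iff.1 hpq)] at hx
  constructor
  · exact not_lt.1 fun h => hx.1.not_gt (orient_apex_pos h)
  · exact not_lt.1 fun h => (lt_iff.1 h).not_ge hx.2

lemma mem_wedge_of_mem_Ioo {p q x : 𝓥.Point} (hx : x ∈ Set.Ioo p q) :
    (x : Pt) ∈ Wedge 𝓥.apex p q := by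
  rw [mem_wedge_of_neg (lt_iff.1 (hx.1.trans hx.2))]
  exact ⟨(lt_iff.1 hx.1).le, (orient_apex_pos hx.2).le⟩

/-- A point of `A ∪ B` other than the apex, as a point of the view. -/
def toPoint (𝓥 : AngularView) (p : Pt) (hp : p ∈ 𝓥.A ∪ 𝓥.B) (hpa : p ≠ 𝓥.apex) : 𝓥.Point :=
  ⟨p, Finset.mem_erase.2 ⟨hpa, hp⟩⟩

lemma apex_notMem_B : 𝓥.apex ∉ 𝓥.B := fun h =>
  ((𝓥.lt_of_mem_B _ h).trans (𝓥.lt_of_mem_A _ 𝓥.apex_mem)).false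

open DividedSignotope

lemma gap_of_inter_wedge_subset {p q : 𝓥.Point} (hpq : p < q) (hp : (p : Pt) ∈ 𝓥.A)
    (hq : (q : Pt) ∈ 𝓥.A)
    (hA : (𝓥.A : Set Pt) ∩ Wedge 𝓥.apex p q ⊆ {𝓥.apex, (p : Pt), (q : Pt)}) :
    𝓥.signotope.Gap Set.univ p q where
  left_mem := trivial
  right_mem := trivial
  lt := hpq
  not_right_left := not_right_iff.2 hp
  not_right_right := not_right_iff.2 hq
  right_of_mem t _ hpt htq := by
    by_contra ht
    obtain h | h | h := hA ⟨not_right_iff.1 ht, mem_wedge_of_mem_Ioo ⟨hpt, htq⟩⟩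
    · exact t.ne_apex h
    · exact hpt.ne' (Point.toPt_injective h)
    · exact htq.ne (Point.toPt_injective h)

lemma inter_wedge_subset_image {p q : 𝓥.Point} (g : 𝓥.signotope.Gap Set.univ p q) :
    (𝓥.B : Set Pt) ∩ Wedge 𝓥.apex p q ⊆ Point.toPt '' (Set.univ ∩ Set.Ioo p q) := by
  rintro b ⟨hb, hbW⟩
  let x : 𝓥.Point := 𝓥.toPoint b (Finset.mem_union_right _ hb) fun h => apex_notMem_B (h ▸ hb)
  have hx : 𝓥.signotope.right x := right_iff.2 hb
  obtain ⟨hpx, hxq⟩ := mem_Icc_of_mem_wedge (x := x) g.lt hbW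
  refine ⟨x, ⟨trivial, hpx.lt_of_ne ?_, hxq.lt_of_ne ?_⟩, rfl⟩
  · exact fun h => g.not_right_left (h ▸ hx)
  · exact fun h => g.not_right_right (h ▸ hx)

lemma ncard_inter_wedge_le {p q : 𝓥.Point} (g : 𝓥.signotope.Gap Set.univ p q) :
    ((𝓥.B : Set Pt) ∩ Wedge 𝓥.apex p q).ncard ≤ (Set.univ ∩ Set.Ioo p q).ncard :=
  (Set.ncard_le_ncard (inter_wedge_subset_image g) (Set.toFinite _)).trans
    (Set.ncard_image_le (Set.toFinite _))

lemma ncard_B_le : (𝓥.B : Set Pt).ncard ≤ (Set.univ ∩ {x | 𝓥.signotope.right x}).ncard := by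
  refine (Set.ncard_le_ncard ?_ (Set.toFinite _)).trans (Set.ncard_image_le (f := Point.toPt)
    (Set.toFinite _))
  intro b hb
  let x : 𝓥.Point := 𝓥.toPoint b (Finset.mem_union_right _ hb) fun h => apex_notMem_B (h ▸ hb)
  have hx : 𝓥.signotope.right x := right_iff.2 hb
  exact ⟨x, ⟨trivial, hx⟩, rfl⟩

theorem ncard_inter_wedge_le_two {p₀ p₁ p₂ p₃ : 𝓥.Point}
    (F : 𝓥.signotope.Frame Set.univ p₀ p₁ p₂ p₃)
    (hnh : ¬∃ H, DividedFiveHole 𝓥.A 𝓥.B H) (hfour : 4 ≤ 𝓥.B.card) :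
    ((𝓥.B : Set Pt) ∩ Wedge 𝓥.apex p₀ p₁).ncard ≤ 2 ∧
      ((𝓥.B : Set Pt) ∩ Wedge 𝓥.apex p₁ p₂).ncard ≤ 2 ∧
        ((𝓥.B : Set Pt) ∩ Wedge 𝓥.apex p₂ p₃).ncard ≤ 2 := by
  have h := noDividedHole_signotope hnh
  rw [← Set.ncard_coe_finset] at hfour
  have hright := hfour.trans ncard_B_le
  exact ⟨(ncard_inter_wedge_le F.gap₀).trans (F.ncard_left_le_two h hright),
    (ncard_inter_wedge_le F.gap₁).trans (F.ncard_middle_le_two h),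
    (ncard_inter_wedge_le F.gap₂).trans (F.ncard_right_le_two h hright)⟩

end AngularView

open Classical in
/-- The part of `A ∪ B` in the convex wedge `Wedge a p q`, seen from the apex `a` of the wedge. -/
def AngularView.ofWedge {x₀ : ℝ} {A B : Finset Pt} {a p q : Pt} (hA : ∀ p ∈ A, p.1 < x₀)
    (hB : ∀ p ∈ B, x₀ < p.1) (hgen : GenPos (↑(A ∪ B) : Set Pt)) (ha : a ∈ A)
    (hpq : orient a p q < 0) : AngularView where
  x₀ := x₀
  A := A.filter (· ∈ Wedge a p q)
  B := B.filter (· ∈ Wedge a p q)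
  apex := a
  dir := q - p
  lt_of_mem_A _ hx := hA _ (Finset.mem_filter.1 hx).1
  lt_of_mem_B _ hx := hB _ (Finset.mem_filter.1 hx).1
  genPos x hx y hy z hz := by
    rw [← Finset.filter_union, Finset.mem_coe, Finset.mem_filter] at hx hy hz
    exact hgen x hx.1 y hy.1 z hz.1
  apex_mem := Finset.mem_filter.2 ⟨ha, apex_mem_wedge hpq⟩
  dir_pos x hx hxa := by
    rw [← Finset.filter_union, Finset.mem_filter] at hx
    exact cross2_sub_pos_of_mem_wedge hpq hx.2 hxa

namespace AngularView

section OfWedge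

variable {x₀ : ℝ} {A B : Finset Pt} {a p q : Pt} {hA : ∀ p ∈ A, p.1 < x₀}
  {hB : ∀ p ∈ B, x₀ < p.1} {hgen : GenPos (↑(A ∪ B) : Set Pt)} {ha : a ∈ A}
  {hpq : orient a p q < 0}

open Classical in
lemma mem_A_ofWedge {x : Pt} : x ∈ (ofWedge hA hB hgen ha hpq).A ↔ x ∈ A ∧ x ∈ Wedge a p q :=
  Finset.mem_filter

open Classical in
lemma mem_B_ofWedge {x : Pt} : x ∈ (ofWedge hA hB hgen ha hpq).B ↔ x ∈ B ∧ x ∈ Wedge a p q :=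
  Finset.mem_filter

lemma coe_B_ofWedge : ((ofWedge hA hB hgen ha hpq).B : Set Pt) = ↑B ∩ Wedge a p q :=
  Set.ext fun _ => mem_B_ofWedge

lemma apex_ofWedge : (ofWedge hA hB hgen ha hpq).apex = a := rfl

variable (hA hB hgen ha hpq) in
lemma exists_point_ofWedge {x : Pt} (hx : x ≠ a ∧ x ∈ A) (hxW : x ∈ Wedge a p q) :
    ∃ y : (ofWedge hA hB hgen ha hpq).Point, (y : Pt) = x :=
  ⟨toPoint _ x (Finset.mem_union_left _ (mem_A_ofWedge.2 ⟨hx.2, hxW⟩)) hx.1, rfl⟩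

lemma mem_Icc_ofWedge {u v : (ofWedge hA hB hgen ha hpq).Point} (hu : (u : Pt) = p)
    (hv : (v : Pt) = q) (x : (ofWedge hA hB hgen ha hpq).Point) : x ∈ Set.Icc u v := by
  refine mem_Icc_of_mem_wedge (lt_iff.2 (by rwa [hu, hv])) ?_
  rw [hu, hv]
  obtain h | h := Finset.mem_union.1 x.mem
  exacts [(mem_A_ofWedge.1 h).2, (mem_B_ofWedge.1 h).2]

lemma gap_ofWedge {u v : (ofWedge hA hB hgen ha hpq).Point} {y z : Pt} (hu : (u : Pt) = y)
    (hv : (v : Pt) = z) (hy : y ∈ A) (hz : z ∈ A) (hyz : orient a y z < 0)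
    (hW : (A : Set Pt) ∩ Wedge a y z ⊆ {a, y, z}) :
    (ofWedge hA hB hgen ha hpq).signotope.Gap Set.univ u v := by
  subst hu hv
  have hsub : ((ofWedge hA hB hgen ha hpq).A : Set Pt) ⊆ A := fun x hx => (mem_A_ofWedge.1 hx).1
  have hmem (x : (ofWedge hA hB hgen ha hpq).Point) (hx : (x : Pt) ∈ A) :
      (x : Pt) ∈ (ofWedge hA hB hgen ha hpq).A := by
    refine (Finset.mem_union.1 x.mem).resolve_right fun h => ?_
    exact ((hA _ hx).trans (hB _ (mem_B_ofWedge.1 h).1)).false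
  exact gap_of_inter_wedge_subset (lt_iff.2 hyz) (hmem u hy) (hmem v hz)
    ((Set.inter_subset_inter_left _ hsub).trans hW)

end OfWedge

end AngularView

open AngularView in
theorem ncard_inter_wedge_le_two {x₀ : ℝ} {A B : Finset Pt} (hA : ∀ p ∈ A, p.1 < x₀)
    (hB : ∀ p ∈ B, x₀ < p.1) (hgen : GenPos (↑(A ∪ B) : Set Pt))
    (hnh : ¬∃ H, DividedFiveHole A B H) {a p₀ p₁ p₂ p₃ : Pt} (ha : a ∈ A)
    (hp : ∀ p ∈ [p₀, p₁, p₂, p₃], p ∈ A.erase a) (h₀₁ : orient a p₀ p₁ < 0)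
    (h₁₂ : orient a p₁ p₂ < 0) (h₂₃ : orient a p₂ p₃ < 0) (h₀₃ : orient a p₀ p₃ < 0)
    (hU : Wedge a p₀ p₁ ∪ Wedge a p₁ p₂ ∪ Wedge a p₂ p₃ = Wedge a p₀ p₃)
    (hA₀ : (A : Set Pt) ∩ Wedge a p₀ p₁ ⊆ {a, p₀, p₁})
    (hA₁ : (A : Set Pt) ∩ Wedge a p₁ p₂ ⊆ {a, p₁, p₂})
    (hA₂ : (A : Set Pt) ∩ Wedge a p₂ p₃ ⊆ {a, p₂, p₃})
    (hconv : Convex ℝ (Wedge a p₀ p₃))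
    (hfour : 4 ≤ ((B : Set Pt) ∩ Wedge a p₀ p₃).ncard) :
    ((B : Set Pt) ∩ Wedge a p₀ p₁).ncard ≤ 2 ∧ ((B : Set Pt) ∩ Wedge a p₁ p₂).ncard ≤ 2 ∧
      ((B : Set Pt) ∩ Wedge a p₂ p₃).ncard ≤ 2 := by
  classical
  have hU₀ : Wedge a p₀ p₁ ⊆ Wedge a p₀ p₃ :=
    hU ▸ Set.subset_union_left.trans Set.subset_union_left
  have hU₁ : Wedge a p₁ p₂ ⊆ Wedge a p₀ p₃ :=
    hU ▸ Set.subset_union_right.trans Set.subset_union_left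
  have hU₂ : Wedge a p₂ p₃ ⊆ Wedge a p₀ p₃ := hU ▸ Set.subset_union_right
  simp only [List.forall_mem_cons, Finset.mem_erase] at hp
  obtain ⟨m₀, m₁, m₂, m₃, -⟩ := hp
  obtain ⟨q₀, e₀⟩ := exists_point_ofWedge hA hB hgen ha h₀₃ m₀ (left_mem_wedge h₀₃)
  obtain ⟨q₁, e₁⟩ := exists_point_ofWedge hA hB hgen ha h₀₃ m₁ (hU₀ (right_mem_wedge h₀₁))
  obtain ⟨q₂, e₂⟩ := exists_point_ofWedge hA hB hgen ha h₀₃ m₂ (hU₁ (right_mem_wedge h₁₂))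
  obtain ⟨q₃, e₃⟩ := exists_point_ofWedge hA hB hgen ha h₀₃ m₃ (right_mem_wedge h₀₃)
  have F : (ofWedge hA hB hgen ha h₀₃).signotope.Frame Set.univ q₀ q₁ q₂ q₃ :=
    ⟨gap_ofWedge e₀ e₁ m₀.2 m₁.2 h₀₁ hA₀, gap_ofWedge e₁ e₂ m₁.2 m₂.2 h₁₂ hA₁,
      gap_ofWedge e₂ e₃ m₂.2 m₃.2 h₂₃ hA₂, fun t _ => mem_Icc_ofWedge e₀ e₃ t⟩
  have hB' : ((ofWedge hA hB hgen ha h₀₃).B : Set Pt) = ↑B ∩ Wedge a p₀ p₃ := coe_B_ofWedge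
  have key := AngularView.ncard_inter_wedge_le_two F (fun ⟨H, hH⟩ => hnh ⟨H, hH.of_filter hconv⟩)
    (by rwa [← Set.ncard_coe_finset, hB'])
  simpa only [hB', e₀, e₁, e₂, e₃, apex_ofWedge, Set.inter_assoc, Set.inter_eq_right.2 hU₀,
    Set.inter_eq_right.2 hU₁, Set.inter_eq_right.2 hU₂] using key

theorem three_consecutive_wedges_bound_general {x₀ : ℝ} {A B : Finset Pt}
    (hA : ∀ p ∈ A, p.1 < x₀) (hB : ∀ p ∈ B, x₀ < p.1) (hgen : GenPos (↑(A ∪ B) : Set Pt))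
    (hnh : ¬∃ H, DividedFiveHole A B H) (hAcard : 6 ≤ A.card) {a p₀ p₁ p₂ p₃ : Pt} (ha : a ∈ A)
    (hp : ∀ p ∈ [p₀, p₁, p₂, p₃], p ∈ A.erase a) (hnodup : [p₀, p₁, p₂, p₃].Nodup)
    (hA₀ : (A : Set Pt) ∩ Wedge a p₀ p₁ ⊆ {a, p₀, p₁})
    (hA₁ : (A : Set Pt) ∩ Wedge a p₁ p₂ ⊆ {a, p₁, p₂})
    (hA₂ : (A : Set Pt) ∩ Wedge a p₂ p₃ ⊆ {a, p₂, p₃})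
    (hconv : Convex ℝ (Wedge a p₀ p₁ ∪ Wedge a p₁ p₂ ∪ Wedge a p₂ p₃))
    (hfour : 4 ≤ ((B : Set Pt) ∩ (Wedge a p₀ p₁ ∪ Wedge a p₁ p₂ ∪ Wedge a p₂ p₃)).ncard) :
    ((B : Set Pt) ∩ Wedge a p₀ p₁).ncard ≤ 2 ∧ ((B : Set Pt) ∩ Wedge a p₁ p₂).ncard ≤ 2 ∧
      ((B : Set Pt) ∩ Wedge a p₂ p₃).ncard ≤ 2 := by
  have hne : Wedge a p₀ p₁ ∪ Wedge a p₁ p₂ ∪ Wedge a p₂ p₃ ≠ Set.univ := by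
    intro huniv
    have hsub : A ⊆ {a, p₀, p₁, p₂, p₃} := by
      intro x hx
      have hxU := huniv.ge (Set.mem_univ x)
      have := @hA₀ x
      have := @hA₁ x
      have := @hA₂ x
      grind
    have := (Finset.card_le_card hsub).trans Finset.card_le_five
    omega
  have horient {p q : Pt} (hp : p ∈ A.erase a) (hq : q ∈ A.erase a) (hpq : p ≠ q) :
      orient a p q ≠ 0 := by
    rw [Finset.mem_erase] at hp hq
    exact hgen.orient_ne_zero (Finset.mem_union_left _ ha) (Finset.mem_union_left _ hp.2)
      (Finset.mem_union_left _ hq.2) hp.1.symm hq.1.symm hpq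
  have hmem := hp
  simp only [List.forall_mem_cons] at hp
  obtain ⟨h₀, h₁, h₂, h₃, -⟩ := hp
  obtain ⟨⟨n₀₁, n₁₂, n₂₃, n₀₃⟩, hU⟩ := union_wedges_eq_wedge (horient h₀ h₁ (by grind))
    (horient h₁ h₂ (by grind)) (horient h₂ h₃ (by grind)) (horient h₀ h₂ (by grind))
    (horient h₀ h₃ (by grind)) hconv hne
  rw [hU] at hconv hfour
  exact ncard_inter_wedge_le_two hA hB hgen hnh ha hmem n₀₁ n₁₂ n₂₃ n₀₃ hU hA₀ hA₁ hA₂ hconv hfour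

namespace StarSetup

variable {x₀ : ℝ} {A : Finset Pt} (S : StarSetup x₀ A)

lemma inter_wedge_subset (hA : 2 ≤ A.card) (k : ℕ) :
    (A : Set Pt) ∩ Wedge S.aStar (S.lbl k) (S.lbl (k + 1)) ⊆
      {S.aStar, S.lbl k, S.lbl (k + 1)} := by
  have hlbl (k : ℕ) : S.lbl (k % (A.card - 1)) = S.lbl k :=
    Function.Periodic.map_mod_nat S.lbl_periodic k
  have hlt : k % (A.card - 1) < A.card - 1 := Nat.mod_lt _ (by omega)
  have h := S.consec (k % (A.card - 1) + 1) (Finset.mem_Icc.2 ⟨by omega, hlt⟩)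
  rwa [Nat.add_sub_cancel, hlbl k, ← hlbl (k % (A.card - 1) + 1), Nat.mod_add_mod,
    hlbl (k + 1)] at h

lemma modEq_of_lbl_eq (hA : 2 ≤ A.card) {j k : ℕ} (h : S.lbl j = S.lbl k) :
    j ≡ k [MOD A.card - 1] := by
  have hred (k : ℕ) : ∃ r ∈ Finset.Icc 1 (A.card - 1), r ≡ k [MOD A.card - 1] ∧
      S.lbl r = S.lbl k := by
    have hlt := Nat.mod_lt (k + (A.card - 2)) (show A.card - 1 > 0 by omega)
    have hmod : (k + (A.card - 2)) % (A.card - 1) + 1 ≡ k [MOD A.card - 1] := by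
      have h₁ := (Nat.mod_modEq (k + (A.card - 2)) (A.card - 1)).add_right 1
      rw [show k + (A.card - 2) + 1 = k + (A.card - 1) by omega] at h₁
      exact h₁.trans (by simp [Nat.ModEq])
    refine ⟨_, Finset.mem_Icc.2 ⟨by omega, hlt⟩, hmod, ?_⟩
    rw [← Function.Periodic.map_mod_nat S.lbl_periodic, hmod,
      Function.Periodic.map_mod_nat S.lbl_periodic]
  obtain ⟨r, hr, hrj, hrS⟩ := hred j
  obtain ⟨s, hs, hsk, hsS⟩ := hred k
  obtain rfl : r = s :=
    (S.lbl_bij (S.lbl j) (S.lbl_mem j)).unique ⟨hr, hrS⟩ ⟨hs, hsS.trans h.symm⟩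
  exact hrj.symm.trans hsk

lemma nodup_lbl (hA : 5 ≤ A.card) (k : ℕ) :
    [S.lbl k, S.lbl (k + 1), S.lbl (k + 2), S.lbl (k + 3)].Nodup := by
  have hne {d : ℕ} (j : ℕ) (h₀ : 0 < d) (hd : d < 4) : S.lbl j ≠ S.lbl (j + d) := fun h => by
    have hdvd := (Nat.modEq_iff_dvd' (Nat.le_add_right j d)).1 (S.modEq_of_lbl_eq (by omega) h)
    have := Nat.le_of_dvd (by omega) hdvd
    omega
  simp [hne k (d := 1), hne k (d := 2), hne k (d := 3), hne (k + 1) (d := 1),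
    hne (k + 1) (d := 2), hne (k + 2) (d := 1)]

end StarSetup

/-- **Lemma 13(i).** Let `P = A ∪ B` be an `ℓ`-divided set with no `ℓ`-divided 5-hole,
`|A| ≥ 6`, and `A` not in convex position. Let `W_i, W_{i+1}, W_{i+2}` be three
consecutive `a*`-wedges whose union is convex and contains at least four points of `B`.
Then `w_i, w_{i+1}, w_{i+2} ≤ 2`. -/
theorem three_consecutive_wedges_bound
    (x0 : ℝ) (A B : Finset Pt)
    (hA : ∀ p ∈ A, p.1 < x0) (hB : ∀ p ∈ B, x0 < p.1)
    (hBne : B.Nonempty)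
    (hgen : GenPos (↑(A ∪ B) : Set Pt))
    (hx : Set.InjOn Prod.fst (↑(A ∪ B) : Set Pt))
    (hAnc : ¬ ConvexPos (↑A : Set Pt))
    (S : StarSetup x0 A)
    (hnh : ¬ ∃ H : Finset Pt, DividedFiveHole A B H)
    (hAcard : 6 ≤ A.card)
    (i : ℕ) (hi : 1 ≤ i)
    (hconv : Convex ℝ (S.W i ∪ S.W (i + 1) ∪ S.W (i + 2)))
    (hfour : 4 ≤ ((↑B : Set Pt) ∩ (S.W i ∪ S.W (i + 1) ∪ S.W (i + 2))).ncard) :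
    S.w B i ≤ 2 ∧ S.w B (i + 1) ≤ 2 ∧ S.w B (i + 2) ≤ 2 := by
  obtain ⟨k, rfl⟩ : ∃ k, i = k + 1 := ⟨i - 1, by omega⟩
  have hwedge := S.inter_wedge_subset (by omega)
  exact three_consecutive_wedges_bound_general hA hB hgen hnh hAcard S.aStar_mem
    (by simp only [List.forall_mem_cons, S.lbl_mem, true_and]; simp) (S.nodup_lbl (by omega) k)
    (hwedge k) (hwedge (k + 1)) (hwedge (k + 2)) hconv hfour

end
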